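/- arXiv:1410.5339 — 11 statements merged into one kernel-verified Lean document; each statement's English description precedes it below -/
import Mathlib

section
/- Let E be a real Banach space, C a nonempty closed convex subset of E, and T an (α,β,γ,δ)-symmetric generalized hybrid self-mapping of C such that the set F(T) of fixed points of T is nonempty and the conditions α+2β+γ ≥ 0, α+β > 0 and δ ≥ 0 hold. Then T is quasi-nonexpansive, i.e., ‖x − Ty‖ ≤ ‖x − y‖ for all x ∈ F(T) and all y ∈ C. -/
open Filter

/-- Let `E` be a real Banach space, `C` a nonempty closed convex subset of `E`,
and `T` an `(α,β,γ,δ)`-symmetric generalized hybrid self-mapping of `C` such that the set of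
fixed points of `T` is nonempty and `α+2β+γ ≥ 0`, `α+β > 0`, `δ ≥ 0`. Then `T` is
quasi-nonexpansive: `‖x − Ty‖ ≤ ‖x − y‖` for all fixed points `x ∈ C` of `T` and all `y ∈ C`. -/
theorem symm_gen_hybrid_quasiNonexpansive
    {E : Type*} [NormedAddCommGroup E] [NormedSpace ℝ E] [CompleteSpace E]
    (C : Set E) (hCne : C.Nonempty) (hCcl : IsClosed C) (hCcv : Convex ℝ C)
    (T : E → E) (hTself : Set.MapsTo T C C)
    (α β γ δ : ℝ)
    (hhyb : ∀ x ∈ C, ∀ y ∈ C,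
      α * ‖T x - T y‖ ^ 2 + β * (‖x - T y‖ ^ 2 + ‖T x - y‖ ^ 2) + γ * ‖x - y‖ ^ 2
        + δ * (‖x - T x‖ ^ 2 + ‖y - T y‖ ^ 2) ≤ 0)
    (hF : ∃ p ∈ C, T p = p)
    (h1 : α + 2 * β + γ ≥ 0) (h2 : α + β > 0) (h3 : δ ≥ 0) :
    ∀ x ∈ C, T x = x → ∀ y ∈ C, ‖x - T y‖ ≤ ‖x - y‖ := by
  intro x hx hTx y hy
  have h := hhyb x hx y hy
  rw [hTx, sub_self, norm_zero] at h
  have hδ : 0 ≤ δ * ‖y - T y‖ ^ 2 := by positivity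
  have hγ : 0 ≤ (α + 2 * β + γ) * ‖x - y‖ ^ 2 := mul_nonneg h1 (sq_nonneg _)
  have hmul : (α + β) * ‖x - T y‖ ^ 2 ≤ (α + β) * ‖x - y‖ ^ 2 := by linarith
  exact (sq_le_sq₀ (norm_nonneg _) (norm_nonneg _)).mp (le_of_mul_le_mul_left hmul h2)
end

section
/- Let E be a real Banach space, C a nonempty subset of E, and let ζ, η be nonnegative real numbers. Every firmly nonexpansive self-mapping T of C is a (ζ+2η, −η, −ζ, 0)-symmetric generalized hybrid mapping, i.e., (ζ+2η)‖Tx−Ty‖² − η(‖x−Ty‖² + ‖Tx−y‖²) − ζ‖x−y‖² ≤ 0 for all x, y ∈ C. -/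
/-- Young's inequality for the pairing of a continuous functional with a vector. -/
theorem two_mul_apply_le_norm_sq_add_norm_sq
    {E : Type*} [SeminormedAddCommGroup E] [NormedSpace ℝ E] (j : E →L[ℝ] ℝ) (u : E) :
    2 * j u ≤ ‖j‖ ^ 2 + ‖u‖ ^ 2 := by
  have h : j u ≤ ‖j‖ * ‖u‖ := (le_abs_self _).trans (j.le_opNorm u)
  linarith [two_mul_le_add_sq ‖j‖ ‖u‖]

/-- Let `E` be a real Banach space, `C` a nonempty subset of `E`, and `ζ, η ≥ 0`.
Every firmly nonexpansive self-mapping `T` of `C` is a `(ζ+2η, −η, −ζ, 0)`-symmetric generalized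
hybrid mapping: `(ζ+2η)‖Tx−Ty‖² − η(‖x−Ty‖² + ‖Tx−y‖²) − ζ‖x−y‖² ≤ 0` for all `x, y ∈ C`.
Here firm nonexpansiveness means: for all `x, y ∈ C` there is `j` in the normalized duality
mapping evaluated at `Tx − Ty` (i.e. `j(Tx−Ty) = ‖Tx−Ty‖² = ‖j‖²`) with `‖Tx−Ty‖² ≤ j(x−y)`. -/
theorem firmlyNonexpansive_symm_gen_hybrid
    {E : Type*} [NormedAddCommGroup E] [NormedSpace ℝ E] [CompleteSpace E]
    (C : Set E) (hCne : C.Nonempty)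
    (T : E → E) (hTself : Set.MapsTo T C C)
    (ζ η : ℝ) (hζ : 0 ≤ ζ) (hη : 0 ≤ η)
    (hfirm : ∀ x ∈ C, ∀ y ∈ C, ∃ j : E →L[ℝ] ℝ,
      j (T x - T y) = ‖T x - T y‖ ^ 2 ∧ ‖j‖ ^ 2 = ‖T x - T y‖ ^ 2 ∧
      ‖T x - T y‖ ^ 2 ≤ j (x - y)) :
    ∀ x ∈ C, ∀ y ∈ C,
      (ζ + 2 * η) * ‖T x - T y‖ ^ 2 - η * (‖x - T y‖ ^ 2 + ‖T x - y‖ ^ 2)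
        - ζ * ‖x - y‖ ^ 2 ≤ 0 := by
  intro x hx y hy
  obtain ⟨j, hj, hnorm, hle⟩ := hfirm x hx y hy
  have hxy := two_mul_apply_le_norm_sq_add_norm_sq j (x - y)
  have hxTy := two_mul_apply_le_norm_sq_add_norm_sq j (x - T y)
  have hTxy := two_mul_apply_le_norm_sq_add_norm_sq j (T x - y)
  simp only [map_sub] at hj hle hxy hxTy hTxy
  have hnonexp : ‖T x - T y‖ ^ 2 ≤ ‖x - y‖ ^ 2 := by linarith
  have hcross : 2 * ‖T x - T y‖ ^ 2 ≤ ‖x - T y‖ ^ 2 + ‖T x - y‖ ^ 2 := by linarith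
  linarith [mul_le_mul_of_nonneg_left hnonexp hζ, mul_le_mul_of_nonneg_left hcross hη]
end

section
/- Let E be a real Banach space and C a nonempty subset of E. Every firmly nonexpansive self-mapping T of C is nonspreading: 2‖Tx − Ty‖² ≤ ‖x − Ty‖² + ‖y − Tx‖² for all x, y ∈ C. -/
/-- Let `E` be a real Banach space and `C` a nonempty subset of `E`. Every
firmly nonexpansive self-mapping `T` of `C` is nonspreading:
`2‖Tx − Ty‖² ≤ ‖x − Ty‖² + ‖y − Tx‖²` for all `x, y ∈ C`. Firm nonexpansiveness: for all
`x, y ∈ C` there is `j` in the normalized duality mapping evaluated at `Tx − Ty`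
(i.e. `j(Tx−Ty) = ‖Tx−Ty‖² = ‖j‖²`) with `‖Tx−Ty‖² ≤ j(x−y)`. -/
theorem firmlyNonexpansive_nonspreading
    {E : Type*} [NormedAddCommGroup E] [NormedSpace ℝ E] [CompleteSpace E]
    (C : Set E) (hCne : C.Nonempty)
    (T : E → E) (hTself : Set.MapsTo T C C)
    (hfirm : ∀ x ∈ C, ∀ y ∈ C, ∃ j : E →L[ℝ] ℝ,
      j (T x - T y) = ‖T x - T y‖ ^ 2 ∧ ‖j‖ ^ 2 = ‖T x - T y‖ ^ 2 ∧
      ‖T x - T y‖ ^ 2 ≤ j (x - y)) :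
    ∀ x ∈ C, ∀ y ∈ C, 2 * ‖T x - T y‖ ^ 2 ≤ ‖x - T y‖ ^ 2 + ‖y - T x‖ ^ 2 := by
  intro x hx y hy
  obtain ⟨j, hj, hnorm, hle⟩ := hfirm x hx y hy
  have hsplit : j (x - y) + j (T x - T y) = j (x - T y) - j (y - T x) := by
    simp only [map_sub]
    ring
  have hxy : j (x - T y) ≤ ‖j‖ * ‖x - T y‖ := (le_abs_self _).trans (j.le_opNorm _)
  have hyx : -j (y - T x) ≤ ‖j‖ * ‖y - T x‖ := (neg_le_abs _).trans (j.le_opNorm _)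
  linarith [two_mul_le_add_sq ‖j‖ ‖x - T y‖, two_mul_le_add_sq ‖j‖ ‖y - T x‖]
end

section
/- Let E be a uniformly convex real Banach space, C a nonempty closed convex subset of E, and T an (α,β,γ,δ)-symmetric generalized hybrid self-mapping of C satisfying α+2β+γ ≥ 0, α+β > 0 and δ ≥ 0. If there exists x ∈ C such that the orbit {Tⁿx : n ∈ ℕ} is bounded, then T has a fixed point in C. -/
open Filter Topology

/-- In a uniformly convex space, the squared norm is uniformly convex on bounded sets. -/
lemma exists_norm_midpoint_sq_le_sub {E : Type*} [NormedAddCommGroup E] [NormedSpace ℝ E]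
    [UniformConvexSpace E] (r : ℝ) {ε : ℝ} (hε : 0 < ε) :
    ∃ d > 0, ∀ a b : E, ‖a‖ ≤ r → ‖b‖ ≤ r → ε ≤ ‖a - b‖ →
      ‖midpoint ℝ a b‖ ^ 2 ≤ (‖a‖ ^ 2 + ‖b‖ ^ 2) / 2 - d := by
  rcases le_or_gt r 0 with hr | hr
  · refine ⟨1, one_pos, fun a b ha hb hab => ?_⟩
    linarith [norm_sub_le a b]
  obtain ⟨t, ht, htE⟩ := exists_forall_closed_ball_dist_add_le_two_sub E (div_pos hε hr)
  set η := ε ^ 2 * t / (32 * r) with hη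
  have hη0 : 0 < η := by positivity
  have hηr : η * r = ε ^ 2 * t / 32 := by rw [hη]; field_simp
  have ordered : ∀ a b : E, ‖b‖ ≤ ‖a‖ → ‖a‖ ≤ r → ε ≤ ‖a - b‖ →
      ‖midpoint ℝ a b‖ ^ 2 ≤ (‖a‖ ^ 2 + ‖b‖ ^ 2) / 2 - min (η ^ 2 / 4) (ε ^ 2 * t / 16) := by
    intro a b hba ha hab
    have hmid : ‖midpoint ℝ a b‖ = ‖a + b‖ / 2 := by
      rw [midpoint_eq_smul_add, norm_smul]; norm_num; ring
    rw [hmid]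
    have hadd := norm_add_le a b
    have h0 := norm_nonneg (a + b)
    have hb0 := norm_nonneg b
    rcases le_or_gt η (‖a‖ - ‖b‖) with h | h
    · have := min_le_left (η ^ 2 / 4) (ε ^ 2 * t / 16)
      nlinarith [pow_le_pow_left₀ h0 hadd 2, pow_le_pow_left₀ hη0.le h 2]
    · have := min_le_right (η ^ 2 / 4) (ε ^ 2 * t / 16)
      set m := ‖a‖
      have hmε : ε ≤ 2 * m := by linarith [norm_sub_le a b]
      have hm0 : 0 < m := by linarith
      have hnorm : ∀ v : E, ‖m⁻¹ • v‖ = ‖v‖ / m := fun v => by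
        rw [norm_smul, norm_inv, Real.norm_of_nonneg hm0.le, inv_mul_eq_div]
      have key := htE (x := m⁻¹ • a) (by rw [hnorm, div_le_one hm0])
        (y := m⁻¹ • b) (by rw [hnorm, div_le_one hm0]; exact hba)
        (by rw [← smul_sub, hnorm]; gcongr)
      rw [← smul_add, hnorm, div_le_iff₀ hm0] at key
      have ht2 : t ≤ 2 := by
        by_contra! hcon
        nlinarith
      have hsq : (‖a + b‖ / 2) ^ 2 ≤ m ^ 2 * (1 - t / 2) := by
        have : (‖a + b‖ / 2) ^ 2 ≤ ((1 - t / 2) * m) ^ 2 :=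
          pow_le_pow_left₀ (by positivity) (by linarith) 2
        have h1 : (1 - t / 2) ^ 2 ≤ 1 - t / 2 := by nlinarith
        nlinarith [mul_le_mul_of_nonneg_left h1 (sq_nonneg m)]
      have hmt : ε ^ 2 * t ≤ 4 * m ^ 2 * t := by
        have := pow_le_pow_left₀ hε.le hmε 2
        nlinarith
      have hηm : η * m ≤ ε ^ 2 * t / 32 := by
        rw [← hηr]; gcongr
      have hbsq : m ^ 2 - 2 * (η * m) ≤ ‖b‖ ^ 2 := by nlinarith
      nlinarith
  refine ⟨min (η ^ 2 / 4) (ε ^ 2 * t / 16), by positivity, fun a b ha hb hab => ?_⟩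
  rcases le_total ‖b‖ ‖a‖ with h | h
  · exact ordered a b h ha hab
  · rw [midpoint_comm, add_comm]
    exact ordered b a h hb (by rwa [norm_sub_rev])

/-- A continuous function on a nonempty closed convex set which is bounded below, has bounded
sublevel sets and is uniformly convex on bounded sets has a strict minimizer. -/
lemma exists_strict_minimizer {E : Type*} [NormedAddCommGroup E] [NormedSpace ℝ E]
    [CompleteSpace E] {C : Set E} (hCne : C.Nonempty) (hCcl : IsClosed C) (hCcv : Convex ℝ C)
    {g : E → ℝ} (hg : Continuous g) (hbelow : BddBelow (g '' C))
    (hsub : ∀ s, ∃ R, ∀ y, g y ≤ s → ‖y‖ ≤ R)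
    (hconv : ∀ R, ∀ ε > 0, ∃ d > 0, ∀ y z, ‖y‖ ≤ R → ‖z‖ ≤ R → ε ≤ ‖y - z‖ →
      g (midpoint ℝ y z) ≤ (g y + g z) / 2 - d) :
    ∃ p ∈ C, ∀ q ∈ C, g q ≤ g p → q = p := by
  set I := sInf (g '' C)
  have hI : ∀ y ∈ C, I ≤ g y := fun y hy => csInf_le hbelow ⟨y, hy, rfl⟩
  have close : ∀ ε > 0, ∃ d > 0, ∀ y ∈ C, ∀ z ∈ C, g y < I + d → g z < I + d →
      ‖y - z‖ < ε := by
    intro ε hε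
    obtain ⟨R, hR⟩ := hsub (I + 1)
    obtain ⟨d, hd, hdconv⟩ := hconv R ε hε
    refine ⟨min d 1, by positivity, fun y hy z hz hgy hgz => ?_⟩
    by_contra! hyz
    have := hI _ (hCcv.midpoint_mem hy hz)
    have h1 := min_le_left d 1
    have h2 := min_le_right d 1
    linarith [hdconv y z (hR y (by linarith)) (hR z (by linarith)) hyz]
  have hex : ∀ k : ℕ, ∃ y ∈ C, g y < I + 1 / ((k : ℝ) + 1) := by
    intro k
    obtain ⟨_, ⟨y, hy, rfl⟩, hlt⟩ := exists_lt_of_csInf_lt (hCne.image g)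
      (lt_add_of_pos_right I (Nat.one_div_pos_of_nat (n := k) (α := ℝ)))
    exact ⟨y, hy, hlt⟩
  choose u huC hu using hex
  have hcauchy : CauchySeq u := by
    rw [Metric.cauchySeq_iff]
    intro ε hε
    obtain ⟨d, hd, hclose⟩ := close ε hε
    obtain ⟨N, hN⟩ := exists_nat_one_div_lt hd
    have hsmall : ∀ k ≥ N, g (u k) < I + d := fun k hk =>
      (hu k).trans (by linarith [Nat.one_div_le_one_div (α := ℝ) hk])
    refine ⟨N, fun j hj k hk => ?_⟩
    rw [dist_eq_norm]
    exact hclose _ (huC j) _ (huC k) (hsmall j hj) (hsmall k hk)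
  obtain ⟨p, hp⟩ := cauchySeq_tendsto_of_complete hcauchy
  have hpC : p ∈ C := hCcl.mem_of_tendsto hp (Eventually.of_forall huC)
  have hgp : g p ≤ I := by
    have hlim : Tendsto (fun k : ℕ => I + 1 / ((k : ℝ) + 1)) atTop (𝓝 (I + 0)) :=
      tendsto_const_nhds.add tendsto_one_div_add_atTop_nhds_zero_nat
    rw [add_zero] at hlim
    exact le_of_tendsto_of_tendsto' ((hg.tendsto p).comp hp) hlim fun k => (hu k).le
  refine ⟨p, hpC, fun q hqC hqp => ?_⟩
  by_contra hne
  obtain ⟨d, hd, hclose⟩ := close ‖q - p‖ (norm_pos_iff.2 (sub_ne_zero.2 hne))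
  exact lt_irrefl _ (hclose q hqC p hpC (by linarith) (by linarith))

/-- The mean of the squared distances from `y` to the first `N` terms of `x`. -/
noncomputable def meanSqDist {E : Type*} [NormedAddCommGroup E] (x : ℕ → E) (N : ℕ) (y : E) : ℝ :=
  (∑ n ∈ Finset.range N, ‖x n - y‖ ^ 2) / N

/-- A termwise affine inequality between squared distances passes to the means. -/
lemma meanSqDist_le_of_forall {E : Type*} [NormedAddCommGroup E] {x : ℕ → E} {y z w : E}
    {a b c : ℝ} (h : ∀ n, ‖x n - y‖ ^ 2 ≤ a * ‖x n - z‖ ^ 2 + b * ‖x n - w‖ ^ 2 + c)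
    {N : ℕ} (hN : 0 < N) :
    meanSqDist x N y ≤ a * meanSqDist x N z + b * meanSqDist x N w + c := by
  have hN' : (0 : ℝ) < N := by exact_mod_cast hN
  have hsum := Finset.sum_le_sum fun n (_ : n ∈ Finset.range N) => h n
  simp only [Finset.sum_add_distrib, ← Finset.mul_sum, Finset.sum_const, Finset.card_range,
    nsmul_eq_mul] at hsum
  unfold meanSqDist
  rw [div_le_iff₀ hN']
  field_simp
  linarith

/-- Along some ultrafilter at infinity, the mean squared distances to a bounded sequence
converge. -/
lemma exists_tendsto_meanSqDist {E : Type*} [NormedAddCommGroup E] {x : ℕ → E} {M : ℝ}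
    (hx : ∀ n, ‖x n‖ ≤ M) :
    ∃ U : Ultrafilter ℕ, (U : Filter ℕ) ≤ atTop ∧
      ∃ g : E → ℝ, ∀ y, Tendsto (fun N => meanSqDist x N y) U (𝓝 (g y)) := by
  let U : Ultrafilter ℕ := Ultrafilter.of atTop
  refine ⟨U, Ultrafilter.of_le _, ?_⟩
  suffices h : ∀ y, ∃ l, Tendsto (fun N => meanSqDist x N y) U (𝓝 l) by
    choose g hg using h
    exact ⟨g, hg⟩
  intro y
  have hmem : ∀ N, meanSqDist x N y ∈ Set.Icc 0 ((M + ‖y‖) ^ 2) := by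
    intro N
    refine ⟨by unfold meanSqDist; positivity, ?_⟩
    rcases Nat.eq_zero_or_pos N with rfl | hN
    · simp only [meanSqDist, Nat.cast_zero, div_zero]; positivity
    · simpa using meanSqDist_le_of_forall (x := x) (y := y) (z := 0) (w := 0) (a := 0) (b := 0)
        (c := (M + ‖y‖) ^ 2) (fun n => by
          simpa using pow_le_pow_left₀ (norm_nonneg _)
            ((norm_sub_le (x n) y).trans (by linarith [hx n])) 2) hN
  obtain ⟨l, -, hl⟩ := isCompact_Icc.ultrafilter_le_nhds
    (U.map fun N => meanSqDist x N y)
    (le_principal_iff.2 (Ultrafilter.mem_map.2 (univ_mem' hmem)))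
  exact ⟨l, hl⟩

/-- A termwise affine inequality between squared distances passes to limits of the means. -/
lemma limit_meanSqDist_le_of_forall {E : Type*} [NormedAddCommGroup E] {x : ℕ → E}
    {F : Filter ℕ} [F.NeBot] (hF : F ≤ atTop) {g : E → ℝ}
    (hg : ∀ y, Tendsto (fun N => meanSqDist x N y) F (𝓝 (g y))) {y z w : E} {a b c : ℝ}
    (h : ∀ n, ‖x n - y‖ ^ 2 ≤ a * ‖x n - z‖ ^ 2 + b * ‖x n - w‖ ^ 2 + c) :
    g y ≤ a * g z + b * g w + c :=
  le_of_tendsto_of_tendsto (hg y)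
    ((((hg z).const_mul a).add ((hg w).const_mul b)).add tendsto_const_nhds)
    ((eventually_gt_atTop 0).filter_mono hF |>.mono fun _ hN => meanSqDist_le_of_forall h hN)

/-- A limit of mean squared distances to a bounded sequence has a strict minimizer on every
nonempty closed convex set. -/
lemma exists_strict_minimizer_limit_meanSqDist {E : Type*} [NormedAddCommGroup E]
    [NormedSpace ℝ E] [CompleteSpace E] [UniformConvexSpace E]
    {C : Set E} (hCne : C.Nonempty) (hCcl : IsClosed C) (hCcv : Convex ℝ C)
    {x : ℕ → E} {M : ℝ} (hx : ∀ n, ‖x n‖ ≤ M) {F : Filter ℕ} [F.NeBot] (hF : F ≤ atTop)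
    {g : E → ℝ} (hg : ∀ y, Tendsto (fun N => meanSqDist x N y) F (𝓝 (g y))) :
    ∃ p ∈ C, ∀ q ∈ C, g q ≤ g p → q = p := by
  have hnonneg : ∀ y, 0 ≤ g y := fun y =>
    ge_of_tendsto' (hg y) fun N => by unfold meanSqDist; positivity
  have hlip : ∀ y z, g y ≤ g z + ‖y - z‖ * (2 * M + ‖y‖ + ‖z‖) := by
    intro y z
    have := limit_meanSqDist_le_of_forall hF hg (y := y) (z := z) (w := z) (a := 1) (b := 0)
      (c := ‖y - z‖ * (2 * M + ‖y‖ + ‖z‖)) fun n => by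
        have h1 : ‖x n - y‖ ≤ ‖x n - z‖ + ‖y - z‖ := by
          simpa [norm_sub_rev z y] using norm_sub_le_norm_sub_add_norm_sub (x n) z y
        have h2 := norm_sub_le (x n) y
        have h3 := norm_sub_le (x n) z
        have h4 := hx n
        have h5 := norm_nonneg (x n - y)
        have h6 := norm_nonneg (x n - z)
        have h7 := norm_nonneg (y - z)
        nlinarith [mul_le_mul_of_nonneg_right
          (show ‖x n - y‖ - ‖x n - z‖ ≤ ‖y - z‖ by linarith) (add_nonneg h5 h6),
          mul_le_mul_of_nonneg_left
          (show ‖x n - y‖ + ‖x n - z‖ ≤ 2 * M + ‖y‖ + ‖z‖ by linarith) h7]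
    linarith
  refine exists_strict_minimizer hCne hCcl hCcv ?_ ⟨0, ?_⟩ ?_ ?_
  · refine continuous_iff_continuousAt.2 fun z => ?_
    rw [ContinuousAt, tendsto_iff_norm_sub_tendsto_zero]
    refine squeeze_zero (g := fun y => ‖y - z‖ * (2 * M + ‖y‖ + ‖z‖)) (fun _ => norm_nonneg _)
      (fun y => ?_) ?_
    · have h := hlip z y
      rw [norm_sub_rev z y] at h
      rw [Real.norm_eq_abs, abs_le]
      constructor <;> linarith [hlip y z]
    · have hc : Continuous fun y : E => ‖y - z‖ * (2 * M + ‖y‖ + ‖z‖) := by fun_prop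
      simpa using hc.tendsto z
  · rintro _ ⟨y, -, rfl⟩
    exact hnonneg y
  · refine fun s => ⟨1 + 2 * M ^ 2 + 2 * s, fun y hy => ?_⟩
    have hle : ‖y‖ ^ 2 ≤ 2 * M ^ 2 + 2 * g y := by
      have hterm : ∀ n, ‖y‖ ^ 2 ≤ 2 * M ^ 2 + 2 * ‖x n - y‖ ^ 2 := fun n => by
        have h1 : ‖y‖ ≤ M + ‖x n - y‖ := by
          linarith [norm_le_norm_add_norm_sub (x n) y, hx n]
        nlinarith [norm_nonneg y, sq_nonneg (M - ‖x n - y‖)]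
      refine ge_of_tendsto (((hg y).const_mul 2).const_add (2 * M ^ 2))
        ((eventually_gt_atTop 0).filter_mono hF |>.mono fun N hN => ?_)
      have hN' : (0 : ℝ) < N := by exact_mod_cast hN
      have hsum := Finset.sum_le_sum fun n (_ : n ∈ Finset.range N) => hterm n
      simp only [Finset.sum_add_distrib, ← Finset.mul_sum, Finset.sum_const, Finset.card_range,
        nsmul_eq_mul] at hsum
      unfold meanSqDist
      field_simp
      linarith
    nlinarith [sq_nonneg (‖y‖ - 1)]
  · intro R ε hε
    obtain ⟨d, hd, hdE⟩ := exists_norm_midpoint_sq_le_sub (E := E) (M + R) hε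
    refine ⟨d, hd, fun y z hy hz hyz => ?_⟩
    have := limit_meanSqDist_le_of_forall hF hg (y := midpoint ℝ y z) (z := y) (w := z)
      (a := 1 / 2) (b := 1 / 2) (c := -d) fun n => by
        have h := hdE (x n - y) (x n - z) ((norm_sub_le _ _).trans (add_le_add (hx n) hy))
          ((norm_sub_le _ _).trans (add_le_add (hx n) hz))
          (by rwa [sub_sub_sub_cancel_left, norm_sub_rev])
        have hmid : midpoint ℝ (x n - y) (x n - z) = x n - midpoint ℝ y z := by
          simp only [midpoint_eq_smul_add, invOf_eq_inv]
          module
        rw [hmid] at h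
        linarith
    linarith

/-- Let `E` be a uniformly convex real Banach space, `C` a nonempty closed
convex subset of `E`, and `T` an `(α,β,γ,δ)`-symmetric generalized hybrid self-mapping of `C`
with `α+2β+γ ≥ 0`, `α+β > 0`, `δ ≥ 0`. If the orbit `{Tⁿx : n ∈ ℕ}` is bounded for some
`x ∈ C`, then `T` has a fixed point in `C`. -/
theorem symm_gen_hybrid_boundedOrbit_fixedPoint
    {E : Type*} [NormedAddCommGroup E] [NormedSpace ℝ E] [CompleteSpace E]
    [UniformConvexSpace E]
    (C : Set E) (hCne : C.Nonempty) (hCcl : IsClosed C) (hCcv : Convex ℝ C)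
    (T : E → E) (hTself : Set.MapsTo T C C)
    (α β γ δ : ℝ)
    (hhyb : ∀ x ∈ C, ∀ y ∈ C,
      α * ‖T x - T y‖ ^ 2 + β * (‖x - T y‖ ^ 2 + ‖T x - y‖ ^ 2) + γ * ‖x - y‖ ^ 2
        + δ * (‖x - T x‖ ^ 2 + ‖y - T y‖ ^ 2) ≤ 0)
    (h1 : α + 2 * β + γ ≥ 0) (h2 : α + β > 0) (h3 : δ ≥ 0)
    (hbdd : ∃ x ∈ C, Bornology.IsBounded (Set.range fun n : ℕ => T^[n] x)) :
    ∃ p ∈ C, T p = p := by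
  obtain ⟨x₀, hx₀, hb⟩ := hbdd
  obtain ⟨M, hM⟩ := isBounded_iff_forall_norm_le.1 hb
  set x : ℕ → E := fun n => T^[n] x₀
  have hx : ∀ n, ‖x n‖ ≤ M := fun n => hM _ ⟨n, rfl⟩
  have hxC : ∀ n, x n ∈ C := fun n => hTself.iterate n hx₀
  have hxsucc : ∀ n, T (x n) = x (n + 1) := fun n => (Function.iterate_succ_apply' T n x₀).symm
  obtain ⟨U, hU, g, hg⟩ := exists_tendsto_meanSqDist hx
  obtain ⟨p, hpC, hp⟩ := exists_strict_minimizer_limit_meanSqDist hCne hCcl hCcv hx hU hg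
  refine ⟨p, hpC, hp _ (hTself hpC) ?_⟩
  have hterm : ∀ n, (α + β) * ‖x n - T p‖ ^ 2 ≤ (α + β) * ‖x n - p‖ ^ 2
      + (α * (‖x n - T p‖ ^ 2 - ‖x (n + 1) - T p‖ ^ 2)
        + β * (‖x n - p‖ ^ 2 - ‖x (n + 1) - p‖ ^ 2)) := by
    intro n
    have h := hhyb (x n) (hxC n) p hpC
    rw [hxsucc] at h
    have hδ : 0 ≤ δ * (‖x n - x (n + 1)‖ ^ 2 + ‖p - T p‖ ^ 2) := by positivity
    nlinarith [mul_nonneg h1 (sq_nonneg ‖x n - p‖)]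
  have hmean : ∀ N, (α + β) * meanSqDist x N (T p) ≤ (α + β) * meanSqDist x N p
      + (α * (‖x 0 - T p‖ ^ 2 - ‖x N - T p‖ ^ 2) + β * (‖x 0 - p‖ ^ 2 - ‖x N - p‖ ^ 2)) / N := by
    intro N
    have hsum := Finset.sum_le_sum fun n (_ : n ∈ Finset.range N) => hterm n
    simp only [Finset.sum_add_distrib, ← Finset.mul_sum] at hsum
    rw [Finset.sum_range_sub' (fun n => ‖x n - T p‖ ^ 2),
      Finset.sum_range_sub' (fun n => ‖x n - p‖ ^ 2)] at hsum
    simp only [meanSqDist, ← mul_div_assoc, ← add_div]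
    gcongr
  have hsq : ∀ y n, ‖x n - y‖ ^ 2 ≤ (M + ‖y‖) ^ 2 := fun y n =>
    pow_le_pow_left₀ (norm_nonneg _) ((norm_sub_le (x n) y).trans (by linarith [hx n])) 2
  have hdiff : ∀ y n, |‖x 0 - y‖ ^ 2 - ‖x n - y‖ ^ 2| ≤ (M + ‖y‖) ^ 2 := fun y n =>
    abs_sub_le_of_nonneg_of_le (sq_nonneg _) (hsq y 0) (sq_nonneg _) (hsq y n)
  have herr : Tendsto (fun N : ℕ => (α * (‖x 0 - T p‖ ^ 2 - ‖x N - T p‖ ^ 2)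
      + β * (‖x 0 - p‖ ^ 2 - ‖x N - p‖ ^ 2)) / (N : ℝ)) atTop (𝓝 0) := by
    refine squeeze_zero_norm (fun N => ?_) (tendsto_const_div_atTop_nhds_zero_nat
      (|α| * (M + ‖T p‖) ^ 2 + |β| * (M + ‖p‖) ^ 2))
    rw [norm_div, Real.norm_natCast, Real.norm_eq_abs]
    gcongr
    refine (abs_add_le _ _).trans ?_
    rw [abs_mul, abs_mul]
    gcongr
    exacts [hdiff _ N, hdiff _ N]
  have hlim := le_of_tendsto_of_tendsto' ((hg (T p)).const_mul (α + β))
    (((hg p).const_mul (α + β)).add (herr.mono_left hU)) hmean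
  rw [add_zero] at hlim
  exact le_of_mul_le_mul_left hlim h2
end

section
/- Let E be a uniformly convex real Banach space, C a nonempty closed convex subset of E, and T an (α,β,γ,δ)-symmetric generalized hybrid self-mapping of C satisfying α+2β+γ ≥ 0, α+β > 0 and δ ≥ 0. Then the following are equivalent: (i) the set of fixed points of T is nonempty; (ii) there exists x ∈ C such that the orbit {Tⁿx : n ∈ ℕ} is bounded. -/
open Filter Topology
open scoped BoundedContinuousFunction

/-- In a uniformly convex space, the squared norm is uniformly convex on bounded sets. -/
theorem exists_forall_norm_midpoint_sq_le {E : Type*} [NormedAddCommGroup E] [NormedSpace ℝ E]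
    [UniformConvexSpace E] {ε : ℝ} (hε : 0 < ε) (R : ℝ) :
    ∃ φ > 0, ∀ u v : E, ‖u‖ ≤ R → ‖v‖ ≤ R → ε ≤ ‖u - v‖ →
      ‖(2⁻¹ : ℝ) • (u + v)‖ ^ 2 ≤ 2⁻¹ * (‖u‖ ^ 2 + ‖v‖ ^ 2) - φ := by
  rcases le_or_gt R 0 with hR | hR
  · refine ⟨1, one_pos, fun u v hu hv huv => ?_⟩
    linarith [norm_sub_le u v]
  obtain ⟨d, hd, hconv⟩ :=
    exists_forall_closed_ball_dist_add_le_two_sub E (div_pos hε hR)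
  set η := min (ε * d / 4) ε
  have hη : 0 < η := lt_min (by positivity) hε
  have hη_le : η ≤ ε := min_le_right _ _
  have hηd : η ≤ ε * d / 4 := min_le_left _ _
  refine ⟨η ^ 2 / 4, by positivity, ?_⟩
  have key : ∀ u v : E, ‖u‖ ≤ R → ‖v‖ ≤ ‖u‖ → ε ≤ ‖u - v‖ →
      ‖(2⁻¹ : ℝ) • (u + v)‖ ^ 2 ≤ 2⁻¹ * (‖u‖ ^ 2 + ‖v‖ ^ 2) - η ^ 2 / 4 := by
    intro u v hu hvu huv
    have hsub := norm_sub_le u v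
    have hadd := norm_add_le u v
    have hnorm : ‖(2⁻¹ : ℝ) • (u + v)‖ = 2⁻¹ * ‖u + v‖ := by
      rw [norm_smul]; norm_num
    rw [hnorm]
    rcases le_or_gt η (‖u‖ - ‖v‖) with h | h
    · nlinarith [norm_nonneg (u + v), norm_nonneg u, norm_nonneg v]
    · have hu0 : 0 < ‖u‖ := by linarith
      have hscale : ∀ w : E, ‖(‖u‖⁻¹ : ℝ) • w‖ = ‖w‖ / ‖u‖ := fun w => by
        rw [norm_smul, norm_inv, norm_norm, div_eq_inv_mul]
      have h2 := @hconv (‖u‖⁻¹ • u) (by rw [hscale, div_self hu0.ne'])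
        (‖u‖⁻¹ • v) (by rw [hscale]; exact (div_le_one hu0).2 hvu)
        (by rw [← smul_sub, hscale]; gcongr)
      rw [← smul_add, hscale, div_le_iff₀ hu0] at h2
      have h3 : ε / 2 * d ≤ ‖u‖ * d := by gcongr; linarith
      have h4 : ‖u + v‖ ≤ ‖u‖ + ‖v‖ - η := by linarith
      nlinarith [norm_nonneg (u + v), sq_nonneg (‖u‖ - ‖v‖)]
  intro u v hu hv huv
  rcases le_total ‖v‖ ‖u‖ with h | h
  · exact key u v hu h huv
  · rw [add_comm u, add_comm (‖u‖ ^ 2)]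
    exact key v u hv h (by rwa [norm_sub_rev])

/-- The left shift of a bounded real sequence. -/
def shiftSeq (f : ℕ →ᵇ ℝ) : ℕ →ᵇ ℝ :=
  f.compContinuous ⟨Nat.succ, continuous_of_discreteTopology⟩

@[simp]
theorem shiftSeq_apply (f : ℕ →ᵇ ℝ) (n : ℕ) : shiftSeq f n = f (n + 1) := rfl

/-- There is a Banach limit: a positive normalized shift-invariant functional on bounded
real sequences. -/
theorem exists_banachLimit :
    ∃ L : (ℕ →ᵇ ℝ) →ₗ[ℝ] ℝ, (∀ f g, (∀ n, f n ≤ g n) → L f ≤ L g) ∧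
      (∀ c, L (BoundedContinuousFunction.const ℕ c) = c) ∧ ∀ f, L (shiftSeq f) = L f := by
  let A : (ℕ →ᵇ ℝ) → ℕ → ℝ := fun f n => ((n : ℝ) + 1)⁻¹ * ∑ k ∈ Finset.range (n + 1), f k
  have hpos : ∀ n : ℕ, 0 < ((n : ℝ) + 1)⁻¹ := fun n => by positivity
  have hmono : ∀ f g : ℕ →ᵇ ℝ, (∀ n, f n ≤ g n) → ∀ n, A f n ≤ A g n := fun f g h n =>
    mul_le_mul_of_nonneg_left (Finset.sum_le_sum fun k _ => h k) (hpos n).le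
  have hconst : ∀ c n, A (BoundedContinuousFunction.const ℕ c) n = c := fun c n => by
    have : (n : ℝ) + 1 ≠ 0 := by positivity
    simp [A]
    field_simp
  have hlim : ∀ f, ∃ l, Tendsto (A f) (hyperfilter ℕ) (𝓝 l) := fun f => by
    have hmem : ∀ n, A f n ∈ Set.Icc (-‖f‖) ‖f‖ := fun n => by
      constructor
      · rw [← hconst (-‖f‖) n]
        exact hmono _ _ (fun k => (abs_le.1 (f.norm_coe_le_norm k)).1) n
      · rw [← hconst ‖f‖ n]
        exact hmono _ _ (fun k => (abs_le.1 (f.norm_coe_le_norm k)).2) n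
    obtain ⟨l, -, hl⟩ := (isCompact_Icc (a := -‖f‖) (b := ‖f‖)).ultrafilter_le_nhds
      ((hyperfilter ℕ).map (A f)) (tendsto_principal.2 (Eventually.of_forall hmem))
    exact ⟨l, hl⟩
  choose L hL using hlim
  refine ⟨⟨⟨L, fun f g => ?_⟩, fun c f => ?_⟩, fun f g h => ?_, fun c => ?_, fun f => ?_⟩
  · refine tendsto_nhds_unique (hL _) (((hL f).add (hL g)).congr fun n => ?_)
    simp [A, Finset.sum_add_distrib, mul_add]
  · refine tendsto_nhds_unique (hL _) (((hL f).const_mul c).congr fun n => ?_)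
    simp only [A, BoundedContinuousFunction.coe_smul, smul_eq_mul, ← Finset.mul_sum]
    ring
  · exact le_of_tendsto_of_tendsto' (hL f) (hL g) (hmono f g h)
  · exact tendsto_nhds_unique (hL _) (tendsto_const_nhds.congr fun n => (hconst c n).symm)
  · have hdiff : Tendsto (fun n => A (shiftSeq f) n - A f n) atTop (𝓝 0) := by
      have h0 : Tendsto (fun n : ℕ => 2 * ‖f‖ * ((n : ℝ) + 1)⁻¹) atTop (𝓝 0) := by
        simpa using (tendsto_one_div_add_atTop_nhds_zero_nat (𝕜 := ℝ)).const_mul (2 * ‖f‖)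
      refine squeeze_zero_norm (fun n => ?_) h0
      have : A (shiftSeq f) n - A f n = ((n : ℝ) + 1)⁻¹ * (f (n + 1) - f 0) := by
        simp only [A, shiftSeq_apply, ← mul_sub, ← Finset.sum_sub_distrib]
        rw [Finset.sum_range_sub (fun k => f k)]
      rw [this, norm_mul, Real.norm_of_nonneg (hpos n).le, mul_comm]
      refine mul_le_mul_of_nonneg_right ?_ (hpos n).le
      linarith [norm_sub_le (f (n + 1)) (f 0), f.norm_coe_le_norm (n + 1), f.norm_coe_le_norm 0]
    have := tendsto_nhds_unique ((hL (shiftSeq f)).sub (hL f))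
      (hdiff.mono_left Nat.hyperfilter_le_atTop)
    exact sub_eq_zero.1 this

/-- The bounded sequence `n ↦ ‖x n - z‖ ^ 2` attached to a bounded sequence `x`. -/
noncomputable def distSqSeq {E : Type*} [NormedAddCommGroup E] {x : ℕ → E} {M : ℝ}
    (hx : ∀ n, ‖x n‖ ≤ M) (z : E) : ℕ →ᵇ ℝ :=
  BoundedContinuousFunction.ofNormedAddCommGroupDiscrete (fun n => ‖x n - z‖ ^ 2)
    ((M + ‖z‖) ^ 2) fun n => by
      rw [norm_pow, norm_norm]
      exact pow_le_pow_left₀ (norm_nonneg _) ((norm_sub_le _ _).trans (by gcongr; exact hx n)) 2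

@[simp]
theorem distSqSeq_apply {E : Type*} [NormedAddCommGroup E] {x : ℕ → E} {M : ℝ}
    (hx : ∀ n, ‖x n‖ ≤ M) (z : E) (n : ℕ) : distSqSeq hx z n = ‖x n - z‖ ^ 2 := rfl

/-- Approximate minimizers over a convex set of the mean squared distance to a bounded sequence
in a uniformly convex space are close to each other. -/
theorem exists_forall_norm_sub_lt_of_mean_distSqSeq_lt {E : Type*} [NormedAddCommGroup E]
    [NormedSpace ℝ E] [UniformConvexSpace E] {x : ℕ → E} {M : ℝ} (hx : ∀ n, ‖x n‖ ≤ M)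
    {L : (ℕ →ᵇ ℝ) →ₗ[ℝ] ℝ} (hmono : ∀ f g, (∀ n, f n ≤ g n) → L f ≤ L g)
    (hconst : ∀ c, L (BoundedContinuousFunction.const ℕ c) = c)
    {C : Set E} (hC : Convex ℝ C) {m : ℝ} (hm : ∀ z ∈ C, m ≤ L (distSqSeq hx z))
    {ε : ℝ} (hε : 0 < ε) :
    ∃ η > 0, ∀ z ∈ C, ∀ w ∈ C, L (distSqSeq hx z) < m + η → L (distSqSeq hx w) < m + η →
      ‖z - w‖ < ε := by
  set K := 2 * M ^ 2 + 2 * (m + 1) with hK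
  have hbound : ∀ z, L (distSqSeq hx z) < m + 1 → ‖z‖ ≤ K + 1 := by
    intro z hz
    have h := hmono (BoundedContinuousFunction.const ℕ (‖z‖ ^ 2))
      (BoundedContinuousFunction.const ℕ (2 * M ^ 2) + (2 : ℝ) • distSqSeq hx z) (fun n => by
        simp only [BoundedContinuousFunction.const_apply, BoundedContinuousFunction.coe_add,
          BoundedContinuousFunction.coe_smul, Pi.add_apply, distSqSeq_apply, smul_eq_mul]
        have h1 : ‖z‖ ≤ ‖x n‖ + ‖x n - z‖ := by
          simpa using norm_sub_le (x n) (x n - z)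
        nlinarith [hx n, norm_nonneg z, norm_nonneg (x n), norm_nonneg (x n - z),
          sq_nonneg (‖x n‖ - ‖x n - z‖)])
    rw [map_add, map_smul, hconst, hconst, smul_eq_mul] at h
    nlinarith [sq_nonneg (‖z‖ - 1)]
  obtain ⟨φ, hφ, hconv⟩ := exists_forall_norm_midpoint_sq_le (E := E) hε (M + (K + 1))
  refine ⟨min φ 1, lt_min hφ one_pos, fun z hz w hw hgz hgw => ?_⟩
  by_contra! hzw
  have hz' := hbound z (hgz.trans_le (by gcongr; exact min_le_right _ _))
  have hw' := hbound w (hgw.trans_le (by gcongr; exact min_le_right _ _))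
  have hmid : (2⁻¹ : ℝ) • (z + w) ∈ C := by
    rw [smul_add]
    exact hC hz hw (by norm_num) (by norm_num) (by norm_num)
  have h := hmono (distSqSeq hx ((2⁻¹ : ℝ) • (z + w)))
    ((2⁻¹ : ℝ) • (distSqSeq hx z + distSqSeq hx w) + BoundedContinuousFunction.const ℕ (-φ))
    (fun n => by
      simp only [BoundedContinuousFunction.const_apply, BoundedContinuousFunction.coe_add,
        BoundedContinuousFunction.coe_smul, Pi.add_apply, distSqSeq_apply, smul_eq_mul]
      have h1 := hconv (x n - z) (x n - w)
        ((norm_sub_le _ _).trans (add_le_add (hx n) hz'))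
        ((norm_sub_le _ _).trans (add_le_add (hx n) hw'))
        (by rwa [sub_sub_sub_cancel_left, norm_sub_rev])
      have h2 : x n - (2⁻¹ : ℝ) • (z + w) = (2⁻¹ : ℝ) • (x n - z + (x n - w)) := by
        module
      rw [h2]
      linarith)
  rw [map_add, map_smul, map_add, hconst, smul_eq_mul] at h
  linarith [hm _ hmid, min_le_left φ 1]

/-- Let `E` be a uniformly convex real Banach space, `C` a nonempty closed
convex subset of `E`, and `T` an `(α,β,γ,δ)`-symmetric generalized hybrid self-mapping of `C`
with `α+2β+γ ≥ 0`, `α+β > 0`, `δ ≥ 0`. Then `T` has a fixed point if and only if the orbit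
`{Tⁿx : n ∈ ℕ}` is bounded for some `x ∈ C`. -/
theorem symm_gen_hybrid_fixedPoint_iff_boundedOrbit
    {E : Type*} [NormedAddCommGroup E] [NormedSpace ℝ E] [CompleteSpace E]
    [UniformConvexSpace E]
    (C : Set E) (hCne : C.Nonempty) (hCcl : IsClosed C) (hCcv : Convex ℝ C)
    (T : E → E) (hTself : Set.MapsTo T C C)
    (α β γ δ : ℝ)
    (hhyb : ∀ x ∈ C, ∀ y ∈ C,
      α * ‖T x - T y‖ ^ 2 + β * (‖x - T y‖ ^ 2 + ‖T x - y‖ ^ 2) + γ * ‖x - y‖ ^ 2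
        + δ * (‖x - T x‖ ^ 2 + ‖y - T y‖ ^ 2) ≤ 0)
    (h1 : α + 2 * β + γ ≥ 0) (h2 : α + β > 0) (h3 : δ ≥ 0) :
    (∃ p ∈ C, T p = p) ↔
      (∃ x ∈ C, Bornology.IsBounded (Set.range fun n : ℕ => T^[n] x)) := by
  constructor
  · rintro ⟨p, hp, hTp⟩
    refine ⟨p, hp, (Bornology.isBounded_singleton (x := p)).subset ?_⟩
    rintro _ ⟨n, rfl⟩
    exact Function.iterate_fixed hTp n
  rintro ⟨x₀, hx₀, hbdd⟩
  obtain ⟨M, hM⟩ := hbdd.exists_norm_le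
  have hx : ∀ n, ‖T^[n] x₀‖ ≤ M := fun n => hM _ ⟨n, rfl⟩
  have hxC : ∀ n, T^[n] x₀ ∈ C := fun n => hTself.iterate n hx₀
  obtain ⟨L, hmono, hconst, hshift⟩ := exists_banachLimit
  set g : E → ℝ := fun z => L (distSqSeq hx z)
  have hg0 : ∀ z, 0 ≤ g z := fun z => by
    rw [← hconst 0]
    exact hmono _ _ fun n => sq_nonneg _
  have hgT : ∀ z ∈ C, g (T z) ≤ g z := by
    intro z hz
    have h := hmono (α • shiftSeq (distSqSeq hx (T z)) +
      β • (distSqSeq hx (T z) + shiftSeq (distSqSeq hx z)) + γ • distSqSeq hx z)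
      (BoundedContinuousFunction.const ℕ 0) (fun n => by
        simp only [BoundedContinuousFunction.const_apply, BoundedContinuousFunction.coe_add,
          BoundedContinuousFunction.coe_smul, Pi.add_apply, distSqSeq_apply, smul_eq_mul,
          shiftSeq_apply, Function.iterate_succ_apply']
        have h := hhyb _ (hxC n) z hz
        have : 0 ≤ δ * (‖T^[n] x₀ - T (T^[n] x₀)‖ ^ 2 + ‖z - T z‖ ^ 2) := by positivity
        linarith)
    simp only [map_add, map_smul, hshift, hconst, smul_eq_mul] at h
    change α * g (T z) + β * (g (T z) + g z) + γ * g z ≤ 0 at h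
    nlinarith [mul_nonneg h1 (hg0 z)]
  have hbelow : BddBelow (g '' C) := ⟨0, by rintro _ ⟨z, -, rfl⟩; exact hg0 z⟩
  set m := sInf (g '' C)
  have hm : ∀ z ∈ C, m ≤ g z := fun z hz => csInf_le hbelow ⟨z, hz, rfl⟩
  have hmin : ∀ n : ℕ, ∃ z ∈ C, g z < m + 1 / ((n : ℝ) + 1) := by
    intro n
    obtain ⟨_, ⟨z, hz, rfl⟩, hlt⟩ := exists_lt_of_csInf_lt (hCne.image g)
      (lt_add_of_pos_right m (Nat.one_div_pos_of_nat (α := ℝ) (n := n)))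
    exact ⟨z, hz, hlt⟩
  choose z hzC hz using hmin
  have hclose : ∀ ε > 0, ∃ N, ∀ k ≥ N, ∀ w ∈ C, g w ≤ g (z k) → ∀ l ≥ N, ‖w - z l‖ < ε := by
    intro ε hε
    obtain ⟨η, hη, h⟩ :=
      exists_forall_norm_sub_lt_of_mean_distSqSeq_lt hx hmono hconst hCcv hm hε
    obtain ⟨N, hN⟩ := exists_nat_one_div_lt hη
    have hlt : ∀ k ≥ N, g (z k) < m + η := fun k hk =>
      (hz k).trans (add_lt_add_right ((Nat.one_div_le_one_div hk).trans_lt hN) m)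
    exact ⟨N, fun k hk w hw hwk l hl => h w hw (z l) (hzC l) (hwk.trans_lt (hlt k hk)) (hlt l hl)⟩
  have hcauchy : CauchySeq z := Metric.cauchySeq_iff.2 fun ε hε => by
    obtain ⟨N, hN⟩ := hclose ε hε
    exact ⟨N, fun k hk l hl => by
      rw [dist_eq_norm]; exact hN k hk _ (hzC k) le_rfl l hl⟩
  obtain ⟨p, hp⟩ := cauchySeq_tendsto_of_complete hcauchy
  have hpC : p ∈ C := hCcl.mem_of_tendsto hp (Eventually.of_forall hzC)
  have hdiff : Tendsto (fun n => T (z n) - z n) atTop (𝓝 0) :=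
    Metric.tendsto_atTop.2 fun ε hε => by
      obtain ⟨N, hN⟩ := hclose ε hε
      exact ⟨N, fun k hk => by
        rw [dist_zero_right]; exact hN k hk _ (hTself (hzC k)) (hgT _ (hzC k)) k hk⟩
  have hTz : Tendsto (fun n => T (z n)) atTop (𝓝 p) := by
    simpa using hdiff.add hp
  refine ⟨p, hpC, ?_⟩
  have hlim : Tendsto (fun n => α * ‖T p - T (z n)‖ ^ 2 +
      β * (‖p - T (z n)‖ ^ 2 + ‖T p - z n‖ ^ 2) + γ * ‖p - z n‖ ^ 2
        + δ * (‖p - T p‖ ^ 2 + ‖z n - T (z n)‖ ^ 2)) atTop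
      (𝓝 (α * ‖T p - p‖ ^ 2 + β * (‖p - p‖ ^ 2 + ‖T p - p‖ ^ 2) + γ * ‖p - p‖ ^ 2
        + δ * (‖p - T p‖ ^ 2 + ‖p - p‖ ^ 2))) := by
    have hsq : ∀ {a b : ℕ → E} {u v : E}, Tendsto a atTop (𝓝 u) → Tendsto b atTop (𝓝 v) →
        Tendsto (fun n => ‖a n - b n‖ ^ 2) atTop (𝓝 (‖u - v‖ ^ 2)) :=
      fun ha hb => ((ha.sub hb).norm.pow 2)
    have hc : ∀ u : E, Tendsto (fun _ : ℕ => u) atTop (𝓝 u) := fun u => tendsto_const_nhds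
    exact ((((hsq (hc _) hTz).const_mul α).add
      (((hsq (hc _) hTz).add (hsq (hc _) hp)).const_mul β)).add
      ((hsq (hc _) hp).const_mul γ)).add
      (((tendsto_const_nhds).add (hsq hp hTz)).const_mul δ)
  have hle := le_of_tendsto' hlim fun n => hhyb p hpC (z n) (hzC n)
  rw [norm_sub_rev p (T p), sub_self, norm_zero] at hle
  have hsq0 : ‖T p - p‖ ^ 2 ≤ 0 := by
    nlinarith [mul_nonneg h3 (sq_nonneg ‖T p - p‖)]
  exact sub_eq_zero.1 (norm_eq_zero.1 (pow_eq_zero_iff two_ne_zero |>.1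
    (le_antisymm hsq0 (sq_nonneg _))))
end

section
/- Let E be a real Banach space satisfying Opial's condition, C a nonempty closed convex subset of E, and T an (α,β,γ,δ)-symmetric generalized hybrid self-mapping of C satisfying α+2β+γ ≥ 0, α+β > 0, β ≤ 0 and δ ≥ 0. Then I − T is demiclosed at 0: if a sequence {xₙ} in C converges weakly to u ∈ C and ‖xₙ − Txₙ‖ → 0, then Tu = u. -/
open Filter Topology

/-- A weakly convergent sequence in a real normed space is norm bounded. -/
theorem exists_norm_le_of_weakly_tendsto {E : Type*} [NormedAddCommGroup E] [NormedSpace ℝ E]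
    {x : ℕ → E} {u : E}
    (hweak : ∀ f : E →L[ℝ] ℝ, Tendsto (fun n => f (x n)) atTop (𝓝 (f u))) :
    ∃ M : ℝ, ∀ n, ‖x n‖ ≤ M := by
  obtain ⟨M, hM⟩ := banach_steinhaus
    (g := fun n => NormedSpace.inclusionInDoubleDual ℝ E (x n)) fun f => by
      obtain ⟨K, hK⟩ := (hweak f).norm.bddAbove_range
      exact ⟨K, fun n => hK ⟨n, rfl⟩⟩
  refine ⟨M, fun n => ?_⟩
  have h := hM n
  rwa [show ‖NormedSpace.inclusionInDoubleDual ℝ E (x n)‖ = ‖x n‖ from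
    (NormedSpace.inclusionInDoubleDualLi ℝ).norm_map (x n)] at h

/-- If `a` exceeds `b` by at most a null sequence, then `liminf a ≤ liminf b`. -/
theorem liminf_le_liminf_of_le_add_null {a b c : ℕ → ℝ} {M : ℝ} (ha : ∀ n, 0 ≤ a n)
    (hb : ∀ n, b n ≤ M) (hc : Tendsto c atTop (𝓝 0)) (h : ∀ n, a n ≤ b n + c n) :
    liminf a atTop ≤ liminf b atTop := by
  by_contra! hlt
  obtain ⟨r, hbr, hra⟩ := exists_between hlt
  obtain ⟨s, hrs, hsa⟩ := exists_between hra
  have hfreq : ∃ᶠ n in atTop, b n < r :=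
    frequently_lt_of_liminf_lt
      (isBoundedUnder_of ⟨M, hb⟩ : IsBoundedUnder (· ≤ ·) atTop b).isCoboundedUnder_ge hbr
  have hev : ∀ᶠ n in atTop, s < a n :=
    eventually_lt_of_lt_liminf hsa (isBoundedUnder_of ⟨0, ha⟩)
  have hcs : ∀ᶠ n in atTop, c n < s - r := hc.eventually_lt_const (sub_pos.2 hrs)
  obtain ⟨n, hn, hn', hn''⟩ := (hfreq.and_eventually (hev.and hcs)).exists
  linarith [h n]

/-- The symmetric generalized hybrid inequality at `x` and `u`, where `T` sends `x` to `x'` and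
the non-fixed point `u` to `v`, bounds `‖x - v‖` by `‖x - u‖` plus an error controlled by
`‖x - x'‖`. -/
theorem norm_sub_le_of_symm_gen_hybrid {E : Type*} [NormedAddCommGroup E]
    {α β γ δ : ℝ} {x x' u v : E}
    (hhyb : α * ‖x' - v‖ ^ 2 + β * (‖x - v‖ ^ 2 + ‖x' - u‖ ^ 2) + γ * ‖x - u‖ ^ 2
      + δ * (‖x - x'‖ ^ 2 + ‖u - v‖ ^ 2) ≤ 0)
    (h1 : α + 2 * β + γ ≥ 0) (h2 : α + β > 0) (h3 : β ≤ 0) (h4 : δ ≥ 0) (huv : u ≠ v) :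
    ‖x - v‖ ≤ ‖x - u‖
      + (2 * (α - β) * ‖x - x'‖ - β * ‖x - x'‖ ^ 2 / ‖u - v‖) / (α + β) := by
  have hd : 0 < ‖u - v‖ := norm_pos_iff.2 (sub_ne_zero.2 huv)
  have hdab : ‖u - v‖ ≤ ‖x - v‖ + ‖x - u‖ := by
    rw [add_comm, norm_sub_rev x u]
    exact norm_sub_le_norm_sub_add_norm_sub u x v
  have hav : ‖x - v‖ ≤ ‖x - x'‖ + ‖x' - v‖ := norm_sub_le_norm_sub_add_norm_sub x x' v
  have hbu : ‖x' - u‖ ≤ ‖x - x'‖ + ‖x - u‖ := by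
    rw [norm_sub_rev x x']
    exact norm_sub_le_norm_sub_add_norm_sub x' x u
  have ha := norm_nonneg (x - v)
  have hb := norm_nonneg (x - u)
  have he := norm_nonneg (x - x')
  have hp := norm_nonneg (x' - v)
  have hq := norm_nonneg (x' - u)
  generalize ‖x - v‖ = a at *
  generalize ‖x - u‖ = b at *
  generalize ‖x - x'‖ = e at *
  generalize ‖x' - v‖ = p at *
  generalize ‖x' - u‖ = q at *
  generalize ‖u - v‖ = d at *
  have hp2 : a ^ 2 - 2 * a * e ≤ p ^ 2 := by
    rcases le_total e a with h | h <;> nlinarith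
  have hq2 : q ^ 2 ≤ (e + b) ^ 2 := pow_le_pow_left₀ hq hbu 2
  have hαp : α * (a ^ 2 - 2 * a * e) ≤ α * p ^ 2 := mul_le_mul_of_nonneg_left hp2 (by linarith)
  have hβq : β * (e + b) ^ 2 ≤ β * q ^ 2 := mul_le_mul_of_nonpos_left hq2 h3
  have hδ : 0 ≤ δ * (e ^ 2 + d ^ 2) := by positivity
  have hγb : 0 ≤ (α + 2 * β + γ) * b ^ 2 := mul_nonneg h1 (sq_nonneg b)
  have hβb : 0 ≤ -β * (a * e) := mul_nonneg (by linarith) (by positivity)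
  have hαb : 0 ≤ α * (b * e) := mul_nonneg (by linarith) (by positivity)
  have hde : -β * e ^ 2 ≤ (a + b) * (-β * e ^ 2 / d) := by
    rw [mul_div_assoc', le_div_iff₀ hd, mul_comm (a + b)]
    exact mul_le_mul_of_nonneg_left hdab (mul_nonneg (by linarith) (sq_nonneg e))
  rw [← sub_le_iff_le_add', le_div_iff₀ h2]
  have hab : 0 < a + b := hd.trans_le hdab
  refine le_of_mul_le_mul_left ?_ hab
  rw [neg_mul, neg_div] at hde
  nlinarith

/-- Let `E` be a real Banach space satisfying Opial's condition, `C` a nonempty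
closed convex subset of `E`, and `T` an `(α,β,γ,δ)`-symmetric generalized hybrid self-mapping
of `C` with `α+2β+γ ≥ 0`, `α+β > 0`, `β ≤ 0`, `δ ≥ 0`. Then `I − T` is demiclosed at `0`:
if `{xₙ} ⊆ C` converges weakly to `u ∈ C` and `‖xₙ − Txₙ‖ → 0`, then `Tu = u`. -/
theorem symm_gen_hybrid_demiclosed
    {E : Type*} [NormedAddCommGroup E] [NormedSpace ℝ E] [CompleteSpace E]
    (hOpial : ∀ (z : ℕ → E) (u : E),
      (∀ f : E →L[ℝ] ℝ, Tendsto (fun n => f (z n)) atTop (𝓝 (f u))) →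
      ∀ v : E, v ≠ u →
        Filter.liminf (fun n => ‖z n - u‖) atTop < Filter.liminf (fun n => ‖z n - v‖) atTop)
    (C : Set E) (hCne : C.Nonempty) (hCcl : IsClosed C) (hCcv : Convex ℝ C)
    (T : E → E) (hTself : Set.MapsTo T C C)
    (α β γ δ : ℝ)
    (hhyb : ∀ x ∈ C, ∀ y ∈ C,
      α * ‖T x - T y‖ ^ 2 + β * (‖x - T y‖ ^ 2 + ‖T x - y‖ ^ 2) + γ * ‖x - y‖ ^ 2
        + δ * (‖x - T x‖ ^ 2 + ‖y - T y‖ ^ 2) ≤ 0)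
    (h1 : α + 2 * β + γ ≥ 0) (h2 : α + β > 0) (h3 : β ≤ 0) (h4 : δ ≥ 0)
    (x : ℕ → E) (hx : ∀ n, x n ∈ C) (u : E) (hu : u ∈ C)
    (hweak : ∀ f : E →L[ℝ] ℝ, Tendsto (fun n => f (x n)) atTop (𝓝 (f u)))
    (hAF : Tendsto (fun n => ‖x n - T (x n)‖) atTop (𝓝 0)) :
    T u = u := by
  by_contra hne
  obtain ⟨M, hM⟩ := exists_norm_le_of_weakly_tendsto hweak
  refine (hOpial x u hweak (T u) hne).not_ge ?_
  refine liminf_le_liminf_of_le_add_null (M := M + ‖u‖) (fun n => norm_nonneg _)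
    (fun n => (norm_sub_le _ _).trans (by linarith [hM n])) ?_
    fun n => norm_sub_le_of_symm_gen_hybrid (hhyb (x n) (hx n) u hu) h1 h2 h3 h4 (Ne.symm hne)
  simpa using (((hAF.const_mul (2 * (α - β))).sub
    (((hAF.pow 2).const_mul β).div_const ‖u - T u‖)).div_const (α + β))
end

section
/- Let E be a uniformly convex real Banach space, C a nonempty closed convex subset of E, and T a quasi-nonexpansive self-mapping of C with a fixed point q. Let {λₙ} ⊆ [0,1] and {γₙ} ⊆ [a,1] with 0 < a ≤ 1, suppose liminf λₙ(1−λₙ) > 0, and define the Ishikawa sequence by x₁ = x ∈ C, yₙ = (1−λₙ)xₙ + λₙTxₙ, x_{n+1} = (1−γₙ)xₙ + γₙTyₙ. Then ‖xₙ − Txₙ‖ → 0 as n → ∞. -/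
open Filter Topology

/-- In a uniformly convex space, the modulus of convexity can be chosen uniformly for all balls of
radius at most `R`. -/
theorem exists_forall_norm_add_le_two_mul_sub_of_le (E : Type*) [NormedAddCommGroup E]
    [NormedSpace ℝ E] [UniformConvexSpace E] {ε : ℝ} (hε : 0 < ε) (R : ℝ) :
    ∃ δ, 0 < δ ∧ ∀ r ≤ R, ∀ ⦃u : E⦄, ‖u‖ ≤ r → ∀ ⦃v : E⦄, ‖v‖ ≤ r → ε ≤ ‖u - v‖ →
      ‖u + v‖ ≤ 2 * r - δ := by
  obtain hR | hR := le_or_gt R 0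
  · refine ⟨1, one_pos, fun r hr u hu v hv huv => ?_⟩
    linarith [norm_sub_le u v]
  obtain ⟨δ, hδ, h⟩ := exists_forall_closed_ball_dist_add_le_two_sub E (div_pos hε hR)
  refine ⟨δ * (ε / 2), by positivity, fun r hr u hu v hv huv => ?_⟩
  have hεr : ε / 2 ≤ r := by linarith [norm_sub_le u v]
  have hr0 : 0 < r := by linarith
  have norm_inv_smul (w : E) : ‖r⁻¹ • w‖ = ‖w‖ / r := by
    rw [norm_smul_of_nonneg (inv_nonneg.2 hr0.le), ← div_eq_inv_mul]
  have hball (w : E) (hw : ‖w‖ ≤ r) : ‖r⁻¹ • w‖ ≤ 1 := by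
    rwa [norm_inv_smul, div_le_one hr0]
  have hadd := h (hball u hu) (hball v hv) (by
    rw [← smul_sub, norm_inv_smul]
    gcongr)
  rw [← smul_add, norm_inv_smul, div_le_iff₀ hr0] at hadd
  nlinarith [mul_le_mul_of_nonneg_left hεr hδ.le]

/-- An estimate at the midpoint of a segment in a ball propagates to the other points of the
segment. -/
theorem norm_convex_comb_le_of_norm_add_le {E : Type*} [NormedAddCommGroup E] [NormedSpace ℝ E]
    {u v : E} {r δ t : ℝ} (hu : ‖u‖ ≤ r) (hv : ‖v‖ ≤ r) (hδ : 0 ≤ δ)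
    (huv : ‖u + v‖ ≤ 2 * r - δ) (ht : t ∈ Set.Icc (0 : ℝ) 1) :
    ‖(1 - t) • u + t • v‖ ≤ r - t * (1 - t) * δ := by
  obtain ⟨ht0, ht1⟩ := ht
  have key (m : ℝ) (w : E) (hm0 : 0 ≤ m) (hm : 0 ≤ 1 - 2 * m) (hw : ‖w‖ ≤ r) :
      ‖m • (u + v) + (1 - 2 * m) • w‖ ≤ r - m * δ := by
    refine (norm_add_le _ _).trans ?_
    rw [norm_smul_of_nonneg hm0, norm_smul_of_nonneg hm]
    nlinarith [mul_le_mul_of_nonneg_left huv hm0, mul_le_mul_of_nonneg_left hw hm]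
  obtain h | h := le_total t (1 / 2)
  · have e : (1 - t) • u + t • v = t • (u + v) + (1 - 2 * t) • u := by module
    rw [e]
    refine (key t u ht0 (by linarith) hu).trans ?_
    nlinarith [mul_nonneg (mul_nonneg ht0 ht0) hδ]
  · have e : (1 - t) • u + t • v = (1 - t) • (u + v) + (1 - 2 * (1 - t)) • v := by module
    rw [e]
    refine (key (1 - t) v (by linarith) (by linarith) hv).trans ?_
    nlinarith [mul_nonneg (mul_nonneg (sub_nonneg.2 ht1) (sub_nonneg.2 ht1)) hδ]

/-- The norm is convex along segments, measured from a base point. -/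
theorem norm_convex_comb_sub_le {E : Type*} [NormedAddCommGroup E] [NormedSpace ℝ E]
    (u v q : E) {t : ℝ} (ht : t ∈ Set.Icc (0 : ℝ) 1) :
    ‖(1 - t) • u + t • v - q‖ ≤ (1 - t) * ‖u - q‖ + t * ‖v - q‖ := by
  have e : (1 - t) • u + t • v - q = (1 - t) • (u - q) + t • (v - q) := by module
  rw [e]
  refine (norm_add_le _ _).trans_eq ?_
  rw [norm_smul_of_nonneg (sub_nonneg.2 ht.2), norm_smul_of_nonneg ht.1]

/-- Let `E` be a uniformly convex real Banach space, `C` a nonempty closed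
convex subset of `E`, and `T` a quasi-nonexpansive self-mapping of `C` with a fixed point `q`.
For the Ishikawa iteration with `λₙ ∈ [0,1]`, `γₙ ∈ [a,1]`, `0 < a ≤ 1` and
`liminf λₙ(1−λₙ) > 0`, one has `‖xₙ − Txₙ‖ → 0`. -/
theorem ishikawa_quasiNonexpansive_asymptotic_regularity
    {E : Type*} [NormedAddCommGroup E] [NormedSpace ℝ E] [CompleteSpace E]
    [UniformConvexSpace E]
    (C : Set E) (hCne : C.Nonempty) (hCcl : IsClosed C) (hCcv : Convex ℝ C)
    (T : E → E) (hTself : Set.MapsTo T C C)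
    (hquasi : ∀ p ∈ C, T p = p → ∀ y ∈ C, ‖p - T y‖ ≤ ‖p - y‖)
    (q : E) (hq : q ∈ C) (hqfix : T q = q)
    (a : ℝ) (ha0 : 0 < a) (ha1 : a ≤ 1)
    (lam gam : ℕ → ℝ)
    (hlam : ∀ n, lam n ∈ Set.Icc (0 : ℝ) 1) (hgam : ∀ n, gam n ∈ Set.Icc a 1)
    (hliminf : 0 < Filter.liminf (fun n => lam n * (1 - lam n)) atTop)
    (x y : ℕ → E) (x₀ : E) (hx₀ : x₀ ∈ C) (hinit : x 0 = x₀)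
    (hy : ∀ n, y n = (1 - lam n) • x n + lam n • T (x n))
    (hxs : ∀ n, x (n + 1) = (1 - gam n) • x n + gam n • T (y n)) :
    Tendsto (fun n => ‖x n - T (x n)‖) atTop (𝓝 0) := by
  have hgam' n : gam n ∈ Set.Icc (0 : ℝ) 1 := ⟨ha0.le.trans (hgam n).1, (hgam n).2⟩
  have hyC n (hn : x n ∈ C) : y n ∈ C := by
    rw [hy]
    exact hCcv hn (hTself hn) (sub_nonneg.2 (hlam n).2) (hlam n).1 (by ring)
  have hxC n : x n ∈ C := by
    induction n with
    | zero => rwa [hinit]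
    | succ n ih =>
      rw [hxs]
      exact hCcv ih (hTself (hyC n ih)) (sub_nonneg.2 (hgam' n).2) (hgam' n).1 (by ring)
  have hT z (hz : z ∈ C) : ‖T z - q‖ ≤ ‖z - q‖ := by
    simpa only [norm_sub_rev q] using hquasi q hq hqfix z hz
  have hyx n : ‖y n - q‖ ≤ ‖x n - q‖ := by
    rw [hy]
    refine (norm_convex_comb_sub_le _ _ _ (hlam n)).trans ?_
    nlinarith [mul_le_mul_of_nonneg_left (hT _ (hxC n)) (hlam n).1]
  have hgap n : a * (‖x n - q‖ - ‖y n - q‖) ≤ ‖x n - q‖ - ‖x (n + 1) - q‖ := by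
    have hstep := norm_convex_comb_sub_le (x n) (T (y n)) q (hgam' n)
    rw [← hxs] at hstep
    nlinarith [mul_le_mul_of_nonneg_left (hT _ (hyC n (hxC n))) (hgam' n).1,
      mul_le_mul_of_nonneg_right (hgam n).1 (sub_nonneg.2 (hyx n))]
  have hanti : Antitone fun n => ‖x n - q‖ := antitone_nat_of_succ_le fun n => by
    have := (mul_nonneg ha0.le (sub_nonneg.2 (hyx n))).trans (hgap n)
    linarith
  obtain ⟨d, hd⟩ : ∃ d, Tendsto (fun n => ‖x n - q‖) atTop (𝓝 d) :=
    ⟨_, tendsto_atTop_ciInf hanti ⟨0, by rintro _ ⟨n, rfl⟩; exact norm_nonneg _⟩⟩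
  have hdiff : Tendsto (fun n => ‖x n - q‖ - ‖x (n + 1) - q‖) atTop (𝓝 0) := by
    simpa using hd.sub ((tendsto_add_atTop_iff_nat 1).2 hd)
  obtain ⟨c, hc0, hc⟩ := exists_between hliminf
  have hbdd : IsBoundedUnder (· ≥ ·) atTop fun n => lam n * (1 - lam n) :=
    isBoundedUnder_of ⟨0, fun n => mul_nonneg (hlam n).1 (sub_nonneg.2 (hlam n).2)⟩
  rw [Metric.tendsto_nhds]
  intro ε hε
  obtain ⟨δ, hδ, hconv⟩ := exists_forall_norm_add_le_two_mul_sub_of_le E hε ‖x 0 - q‖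
  filter_upwards [eventually_lt_of_lt_liminf hc hbdd,
    hdiff.eventually_lt_const (show 0 < a * (c * δ) by positivity)] with n hcn hdn
  rw [dist_zero_right, norm_norm]
  by_contra! hn
  have hmid := hconv _ (hanti n.zero_le) le_rfl (hT _ (hxC n)) (by rwa [sub_sub_sub_cancel_right])
  have hbound := norm_convex_comb_le_of_norm_add_le le_rfl (hT _ (hxC n)) hδ.le hmid (hlam n)
  have e : (1 - lam n) • (x n - q) + lam n • (T (x n) - q) = y n - q := by
    rw [hy]
    module
  rw [e] at hbound
  have hdrop : c * δ ≤ ‖x n - q‖ - ‖y n - q‖ := by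
    linarith [mul_le_mul_of_nonneg_right hcn.le hδ.le]
  linarith [hgap n, mul_le_mul_of_nonneg_left hdrop ha0.le]
end

section
/- Let E be a uniformly convex real Banach space satisfying Opial's condition, C a nonempty closed convex subset of E, and T an (α,β,γ,δ)-symmetric generalized hybrid self-mapping of C with nonempty fixed point set F(T), satisfying α+2β+γ ≥ 0, α+β > 0, β ≤ 0 and δ ≥ 0. Let {λₙ} ⊆ [0,1] and {γₙ} ⊆ [a,1] with 0 < a ≤ 1, suppose liminf λₙ(1−λₙ) > 0, and define the Ishikawa sequence by x₁ = x ∈ C, yₙ = (1−λₙ)xₙ + λₙTxₙ, x_{n+1} = (1−γₙ)xₙ + γₙTyₙ. Then {xₙ} converges weakly to some point x₀ ∈ F(T). -/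
open Filter Topology

section UniformConvexity

variable {E : Type*} [NormedAddCommGroup E] [NormedSpace ℝ E]

/-- The modulus of convexity can be chosen uniformly for all radii below a given bound. -/
theorem UniformConvexSpace.exists_modulus_of_radius_le [UniformConvexSpace E] {ε : ℝ} (hε : 0 < ε)
    {R : ℝ} (hR : 0 < R) :
    ∃ δ, 0 < δ ∧ ∀ r ≤ R, ∀ x y : E, ‖x‖ ≤ r → ‖y‖ ≤ r → ε ≤ ‖x - y‖ →
      ‖x + y‖ ≤ 2 * r - δ := by
  obtain ⟨δ, hδ, H⟩ := exists_forall_closed_ball_dist_add_le_two_sub E (div_pos hε hR)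
  refine ⟨δ * (ε / 2), by positivity, fun r hrR x y hx hy hxy => ?_⟩
  have hεr : ε / 2 ≤ r := by
    have := norm_sub_le x y
    linarith
  have hr : 0 < r := by linarith
  have hnorm (v : E) : ‖r⁻¹ • v‖ = ‖v‖ / r := by
    rw [norm_smul, norm_inv, Real.norm_of_nonneg hr.le, inv_mul_eq_div]
  have key := @H (r⁻¹ • x) (by rw [hnorm]; exact (div_le_one hr).2 hx)
    (r⁻¹ • y) (by rw [hnorm]; exact (div_le_one hr).2 hy)
    (by rw [← smul_sub, hnorm]; exact div_le_div₀ (norm_nonneg _) hxy hr hrR)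
  rw [← smul_add, hnorm, div_le_iff₀ hr] at key
  nlinarith

/-- Convex combinations of two points of a ball which are far apart lie well inside the ball. -/
theorem UniformConvexSpace.exists_norm_combo_le [UniformConvexSpace E] {ε : ℝ} (hε : 0 < ε)
    {R : ℝ} (hR : 0 < R) :
    ∃ δ, 0 < δ ∧ ∀ r ≤ R, ∀ x y : E, ‖x‖ ≤ r → ‖y‖ ≤ r → ε ≤ ‖x - y‖ →
      ∀ t ∈ Set.Icc (0 : ℝ) 1, ‖(1 - t) • x + t • y‖ ≤ r - t * (1 - t) * δ := by
  obtain ⟨δ, hδ, H⟩ := exists_modulus_of_radius_le (E := E) hε hR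
  have half (r : ℝ) (hr : r ≤ R) (x y : E) (hx : ‖x‖ ≤ r) (hy : ‖y‖ ≤ r) (hxy : ε ≤ ‖x - y‖)
      (t : ℝ) (ht0 : 0 ≤ t) (ht : t ≤ 1 / 2) :
      ‖(1 - t) • x + t • y‖ ≤ r - t * (1 - t) * δ := by
    have hsum := H r hr x y hx hy hxy
    have hsplit : (1 - t) • x + t • y = (1 - 2 * t) • x + t • (x + y) := by module
    calc ‖(1 - t) • x + t • y‖ ≤ (1 - 2 * t) * ‖x‖ + t * ‖x + y‖ := by
          rw [hsplit]
          refine (norm_add_le _ _).trans_eq ?_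
          rw [norm_smul, norm_smul, Real.norm_of_nonneg ht0, Real.norm_of_nonneg (by linarith)]
      _ ≤ (1 - 2 * t) * r + t * (2 * r - δ) := by
          gcongr
          linarith
      _ ≤ r - t * (1 - t) * δ := by nlinarith [mul_nonneg (mul_nonneg ht0 ht0) hδ.le]
  refine ⟨δ, hδ, fun r hr x y hx hy hxy t ht => ?_⟩
  rcases le_total t (1 / 2) with h | h
  · exact half r hr x y hx hy hxy t ht.1 h
  · have := half r hr y x hy hx (by rwa [norm_sub_rev]) (1 - t) (by linarith [ht.2]) (by linarith)
    rw [sub_sub_cancel, add_comm] at this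
    linarith

/-- In a uniformly convex Banach space, the closed convex hulls of the tails of a bounded family
along a filter have a common point. -/
theorem UniformConvexSpace.exists_mem_closure_convexHull_image [CompleteSpace E]
    [UniformConvexSpace E] {ι : Type*} (l : Filter ι) [l.NeBot] (x : ι → E) {R : ℝ}
    (hx : ∀ i, ‖x i‖ ≤ R) :
    ∃ u, ∀ S ∈ l, u ∈ closure (convexHull ℝ (x '' S)) := by
  set K : Set ι → Set E := fun S => closure (convexHull ℝ (x '' S))
  have hKmono {S S' : Set ι} (h : S ⊆ S') : K S ⊆ K S' :=
    closure_mono (convexHull_mono (Set.image_mono h))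
  have hKconv (S : Set ι) : Convex ℝ (K S) := (convex_convexHull ℝ _).closure
  set Rad : Set ℝ := {ρ | ∀ S ∈ l, ∃ v ∈ K S, ‖v‖ ≤ ρ}
  have hRne : R ∈ Rad := fun S hS => by
    obtain ⟨i, hi⟩ := l.nonempty_of_mem hS
    exact ⟨x i, subset_closure (subset_convexHull ℝ _ ⟨i, hi, rfl⟩), hx i⟩
  have hRbdd : BddBelow Rad := ⟨0, fun ρ hρ => by
    obtain ⟨v, -, hv⟩ := hρ _ univ_mem
    exact (norm_nonneg v).trans hv⟩
  set r := sInf Rad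
  have hr0 : 0 ≤ r := le_csInf ⟨R, hRne⟩ fun ρ hρ => by
    obtain ⟨v, -, hv⟩ := hρ _ univ_mem
    exact (norm_nonneg v).trans hv
  have habove {η : ℝ} (hη : 0 < η) (S : Set ι) (hS : S ∈ l) : ∃ v ∈ K S, ‖v‖ ≤ r + η := by
    obtain ⟨ρ, hρ, hlt⟩ := exists_lt_of_csInf_lt ⟨R, hRne⟩ (show sInf Rad < r + η by linarith)
    obtain ⟨v, hv, hvρ⟩ := hρ S hS
    exact ⟨v, hv, hvρ.trans hlt.le⟩
  have hbelow {η : ℝ} (hη : 0 < η) : ∃ S ∈ l, ∀ v ∈ K S, r - η < ‖v‖ := by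
    by_contra! hcon
    have := csInf_le hRbdd (show r - η ∈ Rad from hcon)
    linarith
  let G : Filter E :=
    { sets := {A | ∃ S ∈ l, ∃ η > 0, ∀ v ∈ K S, ‖v‖ ≤ r + η → v ∈ A}
      univ_sets := ⟨Set.univ, univ_mem, 1, one_pos, fun _ _ _ => trivial⟩
      sets_of_superset := by
        rintro A B ⟨S, hS, η, hη, h⟩ hAB
        exact ⟨S, hS, η, hη, fun v hv hvn => hAB (h v hv hvn)⟩
      inter_sets := by
        rintro A B ⟨S, hS, η, hη, h⟩ ⟨S', hS', η', hη', h'⟩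
        refine ⟨S ∩ S', inter_mem hS hS', min η η', lt_min hη hη', fun v hv hvn => ⟨?_, ?_⟩⟩
        · exact h v (hKmono Set.inter_subset_left hv) (hvn.trans (by gcongr; exact min_le_left _ _))
        · exact h' v (hKmono Set.inter_subset_right hv)
            (hvn.trans (by gcongr; exact min_le_right _ _)) }
  have hG {A : Set E} : A ∈ G ↔ ∃ S ∈ l, ∃ η > 0, ∀ v ∈ K S, ‖v‖ ≤ r + η → v ∈ A := Iff.rfl
  have hGne : G.NeBot := by
    refine neBot_iff.2 fun hbot => ?_
    obtain ⟨S, hS, η, hη, h⟩ := hG.1 (show (∅ : Set E) ∈ G by rw [hbot]; trivial)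
    obtain ⟨v, hv, hvn⟩ := habove hη S hS
    exact h v hv hvn
  have hcauchy : Cauchy G := by
    refine Metric.cauchy_iff.2 ⟨hGne, fun ε hε => ?_⟩
    obtain ⟨δ, hδ, H⟩ := exists_modulus_of_radius_le (E := E) hε (show 0 < r + 1 by linarith)
    set η := min 1 (δ / 5)
    have hη : 0 < η := by positivity
    have hη1 : η ≤ 1 := min_le_left _ _
    have hηδ : η ≤ δ / 5 := min_le_right _ _
    obtain ⟨S, hS, hSr⟩ := hbelow hη
    refine ⟨{v | v ∈ K S ∧ ‖v‖ ≤ r + η}, hG.2 ⟨S, hS, η, hη, fun v hv hvn => ⟨hv, hvn⟩⟩, ?_⟩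
    rintro v ⟨hv, hvn⟩ w ⟨hw, hwn⟩
    rw [dist_eq_norm]
    by_contra! hfar
    have hsum := H (r + η) (by linarith) v w hvn hwn hfar
    have hmid := hSr _ (hKconv S hv hw (a := 1 / 2) (b := 1 / 2) (by norm_num) (by norm_num)
      (by norm_num))
    rw [← smul_add, norm_smul, Real.norm_of_nonneg (by norm_num)] at hmid
    linarith
  obtain ⟨u, hu⟩ := CompleteSpace.complete hcauchy
  refine ⟨u, fun S hS => ?_⟩
  have hmem : K S ∈ G := hG.2 ⟨S, hS, 1, one_pos, fun v hv _ => hv⟩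
  exact isClosed_closure.mem_of_tendsto (tendsto_id'.2 hu) hmem

/-- A point in the closed convex hulls of all tails of `x` has the expected image under every
functional which converges along `x`. -/
theorem eq_of_tendsto_of_mem_closure_convexHull_image {ι : Type*} {l : Filter ι} {x : ι → E} {u : E}
    (hu : ∀ S ∈ l, u ∈ closure (convexHull ℝ (x '' S))) {f : E →L[ℝ] ℝ} {L : ℝ}
    (hf : Tendsto (fun i => f (x i)) l (𝓝 L)) : f u = L := by
  refine eq_of_forall_dist_le fun ε hε => ?_
  have hS := hf (Metric.closedBall_mem_nhds L hε)
  have hsub : closure (convexHull ℝ (x '' ((fun i => f (x i)) ⁻¹' Metric.closedBall L ε))) ⊆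
      f ⁻¹' Metric.closedBall L ε := by
    refine closure_minimal (convexHull_min ?_ ?_) (Metric.isClosed_closedBall.preimage f.continuous)
    · rintro _ ⟨i, hi, rfl⟩
      exact hi
    · exact (convex_closedBall L ε).linear_preimage f.toLinearMap
  exact hsub (hu _ hS)

/-- A separable set is separated from the origin by countably many functionals. -/
theorem TopologicalSpace.IsSeparable.exists_seq_dual_separating {s : Set E}
    (hs : TopologicalSpace.IsSeparable s) :
    ∃ g : ℕ → E →L[ℝ] ℝ, (∀ k, ‖g k‖ ≤ 1) ∧ ∀ v ∈ s, (∀ k, g k v = 0) → v = 0 := by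
  rcases s.eq_empty_or_nonempty with rfl | hne
  · exact ⟨fun _ => 0, by simp, by simp⟩
  obtain ⟨c, hc, hsc⟩ := hs
  obtain ⟨d, rfl⟩ := hc.exists_eq_range (closure_nonempty_iff.1 (hne.mono hsc))
  choose g hg hgd using fun k => exists_dual_vector'' ℝ (d k)
  refine ⟨g, hg, fun v hv hgv => norm_le_zero_iff.1 (le_of_forall_pos_le_add fun ε hε => ?_)⟩
  obtain ⟨_, ⟨k, rfl⟩, hk⟩ := Metric.mem_closure_iff.1 (hsc hv) (ε / 2) (half_pos hε)
  rw [dist_eq_norm] at hk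
  have hdk : ‖d k‖ ≤ ‖v - d k‖ := by
    have h1 : g k (d k - v) = ‖d k‖ := by rw [map_sub, hgv, sub_zero, hgd]; rfl
    calc ‖d k‖ ≤ ‖g k (d k - v)‖ := by rw [h1, norm_norm]
      _ ≤ 1 * ‖d k - v‖ := (g k).le_of_opNorm_le (hg k) _
      _ = ‖v - d k‖ := by rw [one_mul, norm_sub_rev]
  have := norm_add_le (v - d k) (d k)
  rw [sub_add_cancel] at this
  linarith

/-- Every bounded sequence in a uniformly convex Banach space has a weakly convergent
subsequence. -/
theorem UniformConvexSpace.exists_weakly_convergent_subseq [CompleteSpace E]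
    [UniformConvexSpace E] (x : ℕ → E) {R : ℝ} (hx : ∀ n, ‖x n‖ ≤ R) :
    ∃ u ∈ closure (convexHull ℝ (Set.range x)), ∃ φ : ℕ → ℕ, StrictMono φ ∧
      ∀ f : E →L[ℝ] ℝ, Tendsto (fun n => f (x (φ n))) atTop (𝓝 (f u)) := by
  set M : Submodule ℝ E := (Submodule.span ℝ (Set.range x)).topologicalClosure with hM
  have hMsep : TopologicalSpace.IsSeparable (M : Set E) := by
    rw [hM, Submodule.topologicalClosure_coe]
    exact ((Set.countable_range x).isSeparable.span (R := ℝ)).closure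
  have hhull {S : Set E} (hS : S ⊆ Set.range x) : closure (convexHull ℝ S) ⊆ M := by
    rw [hM, Submodule.topologicalClosure_coe]
    exact closure_mono (convexHull_min (hS.trans Submodule.subset_span) (Submodule.convex _))
  obtain ⟨g, hg, hsep⟩ := hMsep.exists_seq_dual_separating
  have hbound (f : E →L[ℝ] ℝ) (n : ℕ) : f (x n) ∈ Set.Icc (-(‖f‖ * R)) (‖f‖ * R) :=
    abs_le.1 ((f.le_opNorm (x n)).trans (by gcongr; exact hx n))
  obtain ⟨b, -, φ, hφ, hb⟩ := (isCompact_univ_pi fun k =>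
    isCompact_Icc (a := -(‖g k‖ * R)) (b := ‖g k‖ * R)).tendsto_subseq
      (x := fun n k => g k (x n)) fun n k _ => hbound (g k) n
  rw [tendsto_pi_nhds] at hb
  obtain ⟨u, hu⟩ := exists_mem_closure_convexHull_image atTop (x ∘ φ) (fun n => hx (φ n))
  have hu' := hu Set.univ univ_mem
  have hrange (ψ : ℕ → ℕ) (S : Set ℕ) : (x ∘ ψ) '' S ⊆ Set.range x := by
    rintro _ ⟨n, -, rfl⟩
    exact ⟨ψ n, rfl⟩
  refine ⟨u, closure_mono (convexHull_mono (hrange φ _)) hu', φ, hφ, fun f => ?_⟩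
  refine tendsto_of_subseq_tendsto fun ns hns => ?_
  obtain ⟨L, -, ms, hms, hL⟩ := (isCompact_Icc (a := -(‖f‖ * R)) (b := ‖f‖ * R)).tendsto_subseq
    (x := fun n => f (x (φ (ns n)))) fun n => hbound f _
  obtain ⟨w, hw⟩ := exists_mem_closure_convexHull_image atTop (x ∘ fun n => φ (ns (ms n)))
    (fun n => hx _)
  have hwu : w = u := by
    refine sub_eq_zero.1 (hsep _ (M.sub_mem (hhull (hrange _ _) (hw Set.univ univ_mem))
      (hhull (hrange _ _) hu')) fun k => ?_)
    rw [map_sub, eq_of_tendsto_of_mem_closure_convexHull_image hu (hb k),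
      eq_of_tendsto_of_mem_closure_convexHull_image hw
        ((hb k).comp (hns.comp hms.tendsto_atTop)), sub_self]
  refine ⟨ms, ?_⟩
  rw [← hwu, eq_of_tendsto_of_mem_closure_convexHull_image hw hL]
  exact hL

end UniformConvexity

section SymmetricGeneralizedHybrid

variable {E : Type*} [NormedAddCommGroup E] {C : Set E} {T : E → E}
  {α β γ δ : ℝ}

/-- Symmetric generalized hybrid mappings are quasi-nonexpansive. -/
theorem norm_map_sub_le_of_symm_gen_hybrid
    (hhyb : ∀ x ∈ C, ∀ y ∈ C,
      α * ‖T x - T y‖ ^ 2 + β * (‖x - T y‖ ^ 2 + ‖T x - y‖ ^ 2) + γ * ‖x - y‖ ^ 2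
        + δ * (‖x - T x‖ ^ 2 + ‖y - T y‖ ^ 2) ≤ 0)
    (h1 : α + 2 * β + γ ≥ 0) (h2 : α + β > 0) (h4 : δ ≥ 0)
    {p : E} (hp : p ∈ C) (hTp : T p = p) {x : E} (hx : x ∈ C) : ‖T x - p‖ ≤ ‖x - p‖ := by
  have h := hhyb x hx p hp
  rw [hTp, sub_self, norm_zero] at h
  have hδ : 0 ≤ δ * ‖x - T x‖ ^ 2 := by positivity
  have hsq : 0 ≤ (α + 2 * β + γ) * ‖x - p‖ ^ 2 := mul_nonneg h1 (sq_nonneg _)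
  refine (sq_le_sq₀ (norm_nonneg _) (norm_nonneg _)).1 ?_
  refine le_of_mul_le_mul_left ?_ h2
  nlinarith

/-- Demiclosedness at zero of `id - T` for a symmetric generalized hybrid mapping `T` of a space
with Opial's condition. -/
theorem map_eq_self_of_symm_gen_hybrid_of_weakly_tendsto [NormedSpace ℝ E]
    (hOpial : ∀ (z : ℕ → E) (u : E),
      (∀ f : E →L[ℝ] ℝ, Tendsto (fun n => f (z n)) atTop (𝓝 (f u))) →
      ∀ v : E, v ≠ u →
        Filter.liminf (fun n => ‖z n - u‖) atTop < Filter.liminf (fun n => ‖z n - v‖) atTop)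
    (hhyb : ∀ x ∈ C, ∀ y ∈ C,
      α * ‖T x - T y‖ ^ 2 + β * (‖x - T y‖ ^ 2 + ‖T x - y‖ ^ 2) + γ * ‖x - y‖ ^ 2
        + δ * (‖x - T x‖ ^ 2 + ‖y - T y‖ ^ 2) ≤ 0)
    (h1 : α + 2 * β + γ ≥ 0) (h2 : α + β > 0) (h4 : δ ≥ 0)
    {z : ℕ → E} (hzC : ∀ n, z n ∈ C) {R : ℝ} (hzR : ∀ n, ‖z n‖ ≤ R) {u : E} (hu : u ∈ C)
    (hzu : ∀ f : E →L[ℝ] ℝ, Tendsto (fun n => f (z n)) atTop (𝓝 (f u)))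
    (hzT : Tendsto (fun n => z n - T (z n)) atTop (𝓝 0)) : T u = u := by
  by_contra hne
  have hbound (v : E) (n : ℕ) : ‖z n - v‖ ∈ Set.Icc 0 (R + ‖v‖) :=
    ⟨norm_nonneg _, (norm_sub_le _ _).trans (by gcongr; exact hzR n)⟩
  obtain ⟨⟨A, B⟩, -, φ, hφ, hAB⟩ :=
    (isCompact_Icc.prod isCompact_Icc).tendsto_subseq
      (x := fun n => (‖z n - u‖, ‖z n - T u‖)) fun n => ⟨hbound u n, hbound (T u) n⟩
  have hA : Tendsto (fun n => ‖z (φ n) - u‖) atTop (𝓝 A) := (Prod.tendsto_iff _ _).1 hAB |>.1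
  have hB : Tendsto (fun n => ‖z (φ n) - T u‖) atTop (𝓝 B) := (Prod.tendsto_iff _ _).1 hAB |>.2
  have hlt : A < B := by
    have := hOpial (z ∘ φ) u (fun f => (hzu f).comp hφ.tendsto_atTop) (T u) hne
    simp only [Function.comp_apply] at this
    rwa [hA.liminf_eq, hB.liminf_eq] at this
  have hA0 : 0 ≤ A := ge_of_tendsto' hA fun n => norm_nonneg _
  have hT : Tendsto (fun n => ‖z (φ n) - T (z (φ n))‖) atTop (𝓝 0) := by
    simpa using (hzT.comp hφ.tendsto_atTop).norm
  have hshift {v : E} {L : ℝ} (hL : Tendsto (fun n => ‖z (φ n) - v‖) atTop (𝓝 L)) :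
      Tendsto (fun n => ‖T (z (φ n)) - v‖) atTop (𝓝 L) := by
    refine tendsto_of_tendsto_of_dist hL (squeeze_zero (fun _ => dist_nonneg) (fun n => ?_) hT)
    rw [Real.dist_eq]
    refine (abs_norm_sub_norm_le _ _).trans_eq ?_
    rw [sub_sub_sub_cancel_right]
  have hlim := le_of_tendsto' (((((hshift hB).pow 2).const_mul α).add
    (((hB.pow 2).add ((hshift hA).pow 2)).const_mul β)).add ((hA.pow 2).const_mul γ) |>.add
    (((hT.pow 2).add (tendsto_const_nhds (x := ‖u - T u‖ ^ 2))).const_mul δ))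
    fun n => hhyb (z (φ n)) (hzC _) u hu
  have hδ : 0 ≤ δ * ‖u - T u‖ ^ 2 := by positivity
  have hsq : 0 ≤ (α + 2 * β + γ) * A ^ 2 := mul_nonneg h1 (sq_nonneg _)
  have hpos : 0 < (α + β) * (B ^ 2 - A ^ 2) := mul_pos h2 (by nlinarith)
  nlinarith

end SymmetricGeneralizedHybrid



/-- Let `E` be a uniformly convex real Banach space satisfying Opial's
condition, `C` a nonempty closed convex subset of `E`, and `T` an `(α,β,γ,δ)`-symmetric
generalized hybrid self-mapping of `C` with a fixed point, satisfying `α+2β+γ ≥ 0`, `α+β > 0`,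
`β ≤ 0`, `δ ≥ 0`. Then the Ishikawa iteration (with `λₙ ∈ [0,1]`, `γₙ ∈ [a,1]`, `0 < a ≤ 1`,
`liminf λₙ(1−λₙ) > 0`) converges weakly to a fixed point of `T`. -/
theorem ishikawa_symm_gen_hybrid_weak_convergence
    {E : Type*} [NormedAddCommGroup E] [NormedSpace ℝ E] [CompleteSpace E]
    [UniformConvexSpace E]
    (hOpial : ∀ (z : ℕ → E) (u : E),
      (∀ f : E →L[ℝ] ℝ, Tendsto (fun n => f (z n)) atTop (𝓝 (f u))) →
      ∀ v : E, v ≠ u →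
        Filter.liminf (fun n => ‖z n - u‖) atTop < Filter.liminf (fun n => ‖z n - v‖) atTop)
    (C : Set E) (hCne : C.Nonempty) (hCcl : IsClosed C) (hCcv : Convex ℝ C)
    (T : E → E) (hTself : Set.MapsTo T C C)
    (α β γ δ : ℝ)
    (hhyb : ∀ x ∈ C, ∀ y ∈ C,
      α * ‖T x - T y‖ ^ 2 + β * (‖x - T y‖ ^ 2 + ‖T x - y‖ ^ 2) + γ * ‖x - y‖ ^ 2
        + δ * (‖x - T x‖ ^ 2 + ‖y - T y‖ ^ 2) ≤ 0)
    (hF : ∃ p ∈ C, T p = p)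
    (h1 : α + 2 * β + γ ≥ 0) (h2 : α + β > 0) (h3 : β ≤ 0) (h4 : δ ≥ 0)
    (a : ℝ) (ha0 : 0 < a) (ha1 : a ≤ 1)
    (lam gam : ℕ → ℝ)
    (hlam : ∀ n, lam n ∈ Set.Icc (0 : ℝ) 1) (hgam : ∀ n, gam n ∈ Set.Icc a 1)
    (hliminf : 0 < Filter.liminf (fun n => lam n * (1 - lam n)) atTop)
    (x y : ℕ → E) (x₀ : E) (hx₀ : x₀ ∈ C) (hinit : x 0 = x₀)
    (hy : ∀ n, y n = (1 - lam n) • x n + lam n • T (x n))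
    (hxs : ∀ n, x (n + 1) = (1 - gam n) • x n + gam n • T (y n)) :
    ∃ p ∈ C, T p = p ∧
      ∀ f : E →L[ℝ] ℝ, Tendsto (fun n => f (x n)) atTop (𝓝 (f p)) := by
  have hquasi {p : E} (hp : p ∈ C) (hTp : T p = p) {w : E} (hw : w ∈ C) : ‖T w - p‖ ≤ ‖w - p‖ :=
    norm_map_sub_le_of_symm_gen_hybrid hhyb h1 h2 h4 hp hTp hw
  have hcombo {t : ℝ} (ht : t ∈ Set.Icc (0 : ℝ) 1) (v w p : E) :
      ‖(1 - t) • v + t • w - p‖ ≤ (1 - t) * ‖v - p‖ + t * ‖w - p‖ := by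
    have hsplit : (1 - t) • v + t • w - p = (1 - t) • (v - p) + t • (w - p) := by module
    rw [hsplit]
    refine (norm_add_le _ _).trans_eq ?_
    rw [norm_smul, norm_smul, Real.norm_of_nonneg ht.1, Real.norm_of_nonneg (by linarith [ht.2])]
  have hgam' (n : ℕ) : gam n ∈ Set.Icc (0 : ℝ) 1 := ⟨ha0.le.trans (hgam n).1, (hgam n).2⟩
  have hyC_of {n : ℕ} (hn : x n ∈ C) : y n ∈ C := by
    rw [hy]
    exact hCcv hn (hTself hn) (by linarith [(hlam n).2]) (hlam n).1 (by ring)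
  have hxC (n : ℕ) : x n ∈ C := by
    induction n with
    | zero => rwa [hinit]
    | succ n ih =>
      rw [hxs]
      exact hCcv ih (hTself (hyC_of ih)) (by linarith [(hgam' n).2]) (hgam' n).1 (by ring)
  have hyx {p : E} (hp : p ∈ C) (hTp : T p = p) (n : ℕ) : ‖y n - p‖ ≤ ‖x n - p‖ := by
    have h := hcombo (hlam n) (x n) (T (x n)) p
    rw [← hy] at h
    nlinarith [mul_le_mul_of_nonneg_left (hquasi hp hTp (hxC n)) (hlam n).1]
  have hstep {p : E} (hp : p ∈ C) (hTp : T p = p) (n : ℕ) :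
      ‖x (n + 1) - p‖ ≤ ‖x n - p‖ - a * (‖x n - p‖ - ‖y n - p‖) := by
    have h := hcombo (hgam' n) (x n) (T (y n)) p
    rw [← hxs] at h
    nlinarith [mul_le_mul_of_nonneg_left (hquasi hp hTp (hyC_of (hxC n))) (hgam' n).1,
      mul_le_mul_of_nonneg_right (hgam n).1 (sub_nonneg.2 (hyx hp hTp n))]
  have hanti {p : E} (hp : p ∈ C) (hTp : T p = p) : Antitone fun n => ‖x n - p‖ :=
    antitone_nat_of_succ_le fun n => by
      have := mul_nonneg ha0.le (sub_nonneg.2 (hyx hp hTp n))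
      linarith [hstep hp hTp n]
  have hlim {p : E} (hp : p ∈ C) (hTp : T p = p) :
      ∃ d, Tendsto (fun n => ‖x n - p‖) atTop (𝓝 d) :=
    ⟨_, tendsto_atTop_ciInf (hanti hp hTp) ⟨0, by rintro _ ⟨n, rfl⟩; exact norm_nonneg _⟩⟩
  obtain ⟨q, hq, hTq⟩ := hF
  have hxq (n : ℕ) : ‖x n - q‖ ≤ ‖x 0 - q‖ := hanti hq hTq n.zero_le
  have hxR (n : ℕ) : ‖x n‖ ≤ ‖x 0 - q‖ + ‖q‖ := by
    have := norm_add_le (x n - q) q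
    rw [sub_add_cancel] at this
    linarith [hxq n]
  have hdrop : Tendsto (fun n => a⁻¹ * (‖x n - q‖ - ‖x (n + 1) - q‖)) atTop (𝓝 0) := by
    obtain ⟨d, hd⟩ := hlim hq hTq
    simpa using (hd.sub (hd.comp (tendsto_add_atTop_nat 1))).const_mul a⁻¹
  obtain ⟨c, hc0, hc⟩ : ∃ c > 0, ∀ᶠ n in atTop, c < lam n * (1 - lam n) := by
    obtain ⟨c, hc0, hc⟩ := exists_between hliminf
    refine ⟨c, hc0, eventually_lt_of_lt_liminf hc (isBoundedUnder_of ⟨0, fun n => ?_⟩)⟩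
    exact mul_nonneg (hlam n).1 (sub_nonneg.2 (hlam n).2)
  have hres : Tendsto (fun n => x n - T (x n)) atTop (𝓝 0) := by
    refine Metric.tendsto_nhds.2 fun ε hε => ?_
    obtain ⟨η, hη, H⟩ := UniformConvexSpace.exists_norm_combo_le (E := E) hε
      (show 0 < ‖x 0 - q‖ + 1 by positivity)
    filter_upwards [hc, hdrop.eventually_lt_const (mul_pos hc0 hη)] with n hcn hdn
    rw [dist_zero_right]
    by_contra! hfar
    have h := H ‖x n - q‖ (by linarith [hxq n]) (x n - q) (T (x n) - q) le_rfl
      (hquasi hq hTq (hxC n)) (by rwa [sub_sub_sub_cancel_right]) (lam n) (hlam n)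
    have hsplit : (1 - lam n) • (x n - q) + lam n • (T (x n) - q) = y n - q := by
      rw [hy]
      module
    rw [hsplit] at h
    rw [inv_mul_lt_iff₀ ha0] at hdn
    have hstep' := hstep hq hTq n
    have : a * (c * η) < a * (lam n * (1 - lam n) * η) := by gcongr
    have : a * (lam n * (1 - lam n) * η) ≤ a * (‖x n - q‖ - ‖y n - q‖) := by
      gcongr
      linarith
    linarith
  have hcluster {ns : ℕ → ℕ} (hns : Tendsto ns atTop atTop) :
      ∃ p ∈ C, T p = p ∧ ∃ ms : ℕ → ℕ, StrictMono ms ∧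
        ∀ f : E →L[ℝ] ℝ, Tendsto (fun n => f (x (ns (ms n)))) atTop (𝓝 (f p)) := by
    obtain ⟨p, hp, ms, hms, hweak⟩ :=
      UniformConvexSpace.exists_weakly_convergent_subseq (x ∘ ns) fun n => hxR (ns n)
    have hpC : p ∈ C := by
      refine closure_minimal (convexHull_min ?_ hCcv) hCcl hp
      rintro _ ⟨n, rfl⟩
      exact hxC _
    refine ⟨p, hpC, ?_, ms, hms, hweak⟩
    exact map_eq_self_of_symm_gen_hybrid_of_weakly_tendsto hOpial hhyb h1 h2 h4
      (z := fun n => x (ns (ms n))) (fun n => hxC _) (fun n => hxR _) hpC hweak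
      (hres.comp (hns.comp hms.tendsto_atTop))
  have hlt {p p' : E} (hp : p ∈ C) (hTp : T p = p) (hp' : p' ∈ C) (hTp' : T p' = p')
      (hne : p' ≠ p) {ns : ℕ → ℕ} (hns : Tendsto ns atTop atTop)
      (hweak : ∀ f : E →L[ℝ] ℝ, Tendsto (fun n => f (x (ns n))) atTop (𝓝 (f p))) :
      liminf (fun n => ‖x n - p‖) atTop < liminf (fun n => ‖x n - p'‖) atTop := by
    obtain ⟨d, hd⟩ := hlim hp hTp
    obtain ⟨d', hd'⟩ := hlim hp' hTp'
    have h := hOpial (fun n => x (ns n)) p hweak p' hne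
    rwa [hd.liminf_eq, hd'.liminf_eq, ← (hd.comp hns).liminf_eq, ← (hd'.comp hns).liminf_eq]
  obtain ⟨p, hp, hTp, ks, hks, hpweak⟩ := hcluster tendsto_id
  refine ⟨p, hp, hTp, fun f => tendsto_of_subseq_tendsto fun ns hns => ?_⟩
  obtain ⟨p', hp', hTp', ms, hms, hweak⟩ := hcluster hns
  have hpp : p' = p := by
    by_contra hne
    exact lt_asymm (hlt hp hTp hp' hTp' hne hks.tendsto_atTop hpweak)
      (hlt hp' hTp' hp hTp (Ne.symm hne) (hns.comp hms.tendsto_atTop) hweak)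
  exact ⟨ms, hpp ▸ hweak f⟩
end

section
/- Let E be a uniformly convex real Banach space satisfying Opial's condition, C a nonempty closed convex subset of E, and T a hybrid self-mapping of C with nonempty fixed point set F(T). Let {λₙ} ⊆ [0,1] and {γₙ} ⊆ [a,1] with 0 < a ≤ 1, suppose liminf λₙ(1−λₙ) > 0, and define the Ishikawa sequence by x₁ = x ∈ C, yₙ = (1−λₙ)xₙ + λₙTxₙ, x_{n+1} = (1−γₙ)xₙ + γₙTyₙ. Then {xₙ} converges weakly to some point x₀ ∈ F(T). -/
open Filter Topology

section UniformConvex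

variable {E : Type*} [NormedAddCommGroup E] [NormedSpace ℝ E] [UniformConvexSpace E]

/-- In a uniformly convex space, two vectors of norm almost at most `d` whose sum has norm almost
at least `2 * d` are close to each other. -/
theorem exists_forall_norm_le_add_dist_add_le_two_mul_sub {ε d : ℝ} (hε : 0 < ε) (hd : 0 ≤ d) :
    ∃ δ, 0 < δ ∧ ∀ ⦃u : E⦄, ‖u‖ ≤ d + δ → ∀ ⦃v⦄, ‖v‖ ≤ d + δ → ε ≤ ‖u - v‖ →
      ‖u + v‖ ≤ 2 * d - δ := by
  obtain ⟨δ₀, hδ₀, h⟩ := exists_forall_closed_ball_dist_add_le_two_mul_sub E (half_pos hε) d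
  set δ := min (ε / 4) (δ₀ / 3)
  have hδ1 : δ ≤ ε / 4 := min_le_left _ _
  have hδ2 : δ ≤ δ₀ / 3 := min_le_right _ _
  have hpos : 0 < δ := lt_min (by positivity) (by positivity)
  have hdδ : 0 < d + δ := by positivity
  have norm_scaled : ∀ w : E, ‖w‖ ≤ d + δ → ‖(d / (d + δ)) • w‖ ≤ d := fun w hw => by
    rw [norm_smul_of_nonneg (by positivity), div_mul_eq_mul_div, div_le_iff₀ hdδ]
    exact mul_le_mul_of_nonneg_left hw hd
  have dist_scaled : ∀ w : E, ‖w‖ ≤ d + δ → ‖w - (d / (d + δ)) • w‖ ≤ δ := fun w hw => by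
    have : w - (d / (d + δ)) • w = (δ / (d + δ)) • w := by
      rw [show δ / (d + δ) = 1 - d / (d + δ) by field_simp; ring, sub_smul, one_smul]
    rw [this, norm_smul_of_nonneg (by positivity), div_mul_eq_mul_div, div_le_iff₀ hdδ]
    exact mul_le_mul_of_nonneg_left hw hpos.le
  refine ⟨δ, hpos, fun u hu v hv huv => ?_⟩
  have key := h (norm_scaled u hu) (norm_scaled v hv)
  have hu' := dist_scaled u hu
  have hv' := dist_scaled v hv
  generalize (d / (d + δ)) • u = u' at key hu'
  generalize (d / (d + δ)) • v = v' at key hv'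
  have hsub : ‖u - v‖ ≤ ‖u' - v'‖ + ‖u - u'‖ + ‖v - v'‖ := by
    rw [norm_sub_rev v v', show u - v = u' - v' + (u - u') + (v' - v) by abel]
    exact norm_add₃_le
  have hadd : ‖u + v‖ ≤ ‖u' + v'‖ + ‖u - u'‖ + ‖v - v'‖ := by
    rw [show u + v = u' + v' + (u - u') + (v - v') by abel]
    exact norm_add₃_le
  have := key (by linarith)
  linarith

/-- A version of uniform convexity for sequences and convex combinations: if `‖u n‖` and `‖v n‖`
are asymptotically at most `d`, convex combinations bounded away from the end points can only have
norm tending to `d` if `u n - v n` tends to zero. -/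
theorem tendsto_norm_sub_zero_of_tendsto_norm_convex_comb {u v : ℕ → E} {t : ℕ → ℝ} {b d : ℝ}
    (hb : 0 < b) (ht : ∀ n, t n ∈ Set.Icc (0 : ℝ) 1) (htb : ∀ᶠ n in atTop, b ≤ t n * (1 - t n))
    (hu : Tendsto (fun n => ‖u n‖) atTop (𝓝 d)) (hvu : ∀ n, ‖v n‖ ≤ ‖u n‖)
    (hw : Tendsto (fun n => ‖(1 - t n) • u n + t n • v n‖) atTop (𝓝 d)) :
    Tendsto (fun n => ‖u n - v n‖) atTop (𝓝 0) := by
  have hd : 0 ≤ d := ge_of_tendsto' hu fun n => norm_nonneg _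
  rw [Metric.tendsto_atTop']
  intro ε hε
  obtain ⟨δ, hδ, huc⟩ := exists_forall_norm_le_add_dist_add_le_two_mul_sub (E := E) hε hd
  set η := min δ (b * δ / 2)
  have hη : 0 < η := lt_min hδ (by positivity)
  have hηδ : η ≤ δ := min_le_left _ _
  have hηb : η ≤ b * δ / 2 := min_le_right _ _
  have hev : ∀ᶠ n in atTop, ‖u n - v n‖ < ε := by
    filter_upwards [htb, hu.eventually (gt_mem_nhds (show d < d + η by linarith)),
      hw.eventually (lt_mem_nhds (show d - b * δ / 2 < d by linarith [mul_pos hb hδ]))]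
      with n hbn hun hwn
    by_contra! hε'
    have hv : ‖v n‖ ≤ d + η := (hvu n).trans hun.le
    have hsum := huc (by linarith) (by linarith) hε'
    obtain ⟨ht0, ht1⟩ := ht n
    rcases le_total (t n) (1 / 2) with h | h
    · have : ‖(1 - t n) • u n + t n • v n‖ ≤ (1 - 2 * t n) * ‖u n‖ + t n * ‖u n + v n‖ := by
        rw [← norm_smul_of_nonneg ht0, ← norm_smul_of_nonneg (show 0 ≤ 1 - 2 * t n by linarith)]
        refine le_trans (le_of_eq ?_) (norm_add_le _ _)
        congr 1
        module
      have hbt : b ≤ t n := by nlinarith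
      linarith [mul_le_mul_of_nonneg_left hun.le (show 0 ≤ 1 - 2 * t n by linarith),
        mul_le_mul_of_nonneg_left hsum ht0, mul_le_mul_of_nonneg_right hbt hδ.le,
        mul_nonneg ht0 hη.le]
    · have : ‖(1 - t n) • u n + t n • v n‖ ≤
          (2 * t n - 1) * ‖v n‖ + (1 - t n) * ‖u n + v n‖ := by
        rw [← norm_smul_of_nonneg (show 0 ≤ 1 - t n by linarith),
          ← norm_smul_of_nonneg (show 0 ≤ 2 * t n - 1 by linarith)]
        refine le_trans (le_of_eq ?_) (norm_add_le _ _)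
        congr 1
        module
      have hbt : b ≤ 1 - t n := by nlinarith
      have ht1' : 0 ≤ 1 - t n := sub_nonneg.2 ht1
      linarith [mul_le_mul_of_nonneg_left hv (show 0 ≤ 2 * t n - 1 by linarith),
        mul_le_mul_of_nonneg_left hsum ht1', mul_le_mul_of_nonneg_right hbt hδ.le,
        mul_nonneg ht1' hη.le]
  obtain ⟨N, hN⟩ := eventually_atTop.1 hev
  exact ⟨N, fun n hn => by simpa using hN n hn.le⟩

/-- A decreasing sequence of nonempty bounded closed convex sets in a uniformly convex Banach space
has a common point. -/
theorem nonempty_iInter_of_antitone_convex [CompleteSpace E] {K : ℕ → Set E} (hanti : Antitone K)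
    (hne : ∀ m, (K m).Nonempty) (hcl : ∀ m, IsClosed (K m)) (hcv : ∀ m, Convex ℝ (K m))
    {M : ℝ} (hM : ∀ z ∈ K 0, ‖z‖ ≤ M) : (⋂ m, K m).Nonempty := by
  set r : ℕ → ℝ := fun m => Metric.infDist 0 (K m)
  have hle : ∀ m, ∀ z ∈ K m, r m ≤ ‖z‖ := fun m z hz => by
    simpa using Metric.infDist_le_dist_of_mem (x := (0 : E)) hz
  have hmono : Monotone r := fun m n hmn => Metric.infDist_le_infDist_of_subset (hanti hmn) (hne n)
  have hbdd : BddAbove (Set.range r) := by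
    refine ⟨M, ?_⟩
    rintro _ ⟨m, rfl⟩
    obtain ⟨z, hz⟩ := hne m
    exact (hle m z hz).trans (hM z (hanti m.zero_le hz))
  set d := ⨆ m, r m
  have hlim : Tendsto r atTop (𝓝 d) := tendsto_atTop_ciSup hmono hbdd
  have hrd : ∀ m, r m ≤ d := le_ciSup hbdd
  have hd : 0 ≤ d := Metric.infDist_nonneg.trans (hrd 0)
  have hex : ∀ m : ℕ, ∃ z ∈ K m, ‖z‖ < r m + 1 / (m + 1) := fun m => by
    obtain ⟨z, hz, h⟩ := (Metric.infDist_lt_iff (hne m)).1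
      (show Metric.infDist 0 (K m) < r m + 1 / (m + 1) from lt_add_of_pos_right _ (by positivity))
    exact ⟨z, hz, by simpa using h⟩
  choose z hzK hz using hex
  have hcauchy : CauchySeq z := by
    rw [Metric.cauchySeq_iff]
    intro ε hε
    obtain ⟨δ, hδ, huc⟩ := exists_forall_norm_le_add_dist_add_le_two_mul_sub (E := E) hε hd
    obtain ⟨N, hN1, hN2⟩ := ((hlim.eventually (lt_mem_nhds (show d - δ / 2 < d by linarith))).and
      (tendsto_one_div_add_atTop_nhds_zero_nat.eventually (gt_mem_nhds hδ))).exists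
    have hzN : ∀ m ≥ N, ‖z m‖ ≤ d + δ := fun m hm => by
      have : (1 : ℝ) / (m + 1) ≤ 1 / (N + 1) := Nat.one_div_le_one_div hm
      linarith [hz m, hrd m]
    refine ⟨N, fun m hm n hn => ?_⟩
    rw [dist_eq_norm]
    by_contra! h
    have hsum := huc (hzN m hm) (hzN n hn) h
    have hmid := hle N _ (hcv N (hanti hm (hzK m)) (hanti hn (hzK n))
      (show (0 : ℝ) ≤ 1 / 2 by norm_num) (show (0 : ℝ) ≤ 1 / 2 by norm_num) (by norm_num))
    rw [← smul_add, norm_smul_of_nonneg (by norm_num)] at hmid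
    linarith
  obtain ⟨w, hw⟩ := cauchySeq_tendsto_of_complete hcauchy
  refine ⟨w, Set.mem_iInter.2 fun m => (hcl m).mem_of_tendsto hw ?_⟩
  filter_upwards [eventually_ge_atTop m] with n hn using hanti hn (hzK n)

/-- A bounded sequence in a uniformly convex Banach space has a point lying in the closed convex
hull of each of its tails. -/
theorem exists_forall_mem_closure_convexHull_tail [CompleteSpace E] {x : ℕ → E} {M : ℝ}
    (hM : ∀ n, ‖x n‖ ≤ M) : ∃ u, ∀ m, u ∈ closure (convexHull ℝ (x '' Set.Ici m)) := by
  obtain ⟨u, hu⟩ := nonempty_iInter_of_antitone_convex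
    (K := fun m => closure (convexHull ℝ (x '' Set.Ici m)))
    (fun m n hmn => closure_mono (convexHull_mono (Set.image_mono (Set.Ici_subset_Ici.2 hmn))))
    (fun m => ((Set.nonempty_Ici.image x).convexHull).closure) (fun m => isClosed_closure)
    (fun m => (convex_convexHull ℝ _).closure) (M := M) (by
      intro z hz
      have : closure (convexHull ℝ (x '' Set.Ici 0)) ⊆ Metric.closedBall 0 M :=
        closure_minimal (convexHull_min (by rintro _ ⟨n, -, rfl⟩; simpa using hM n)
          (convex_closedBall 0 M)) Metric.isClosed_closedBall
      simpa using this hz)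
  exact ⟨u, Set.mem_iInter.1 hu⟩

end UniformConvex

section Weak

variable {E : Type*} [NormedAddCommGroup E] [NormedSpace ℝ E]

/-- If `f (x n)` converges, its limit is the value of `f` at any point lying in the closed convex
hulls of all tails of `x`. -/
theorem eq_of_mem_closure_convexHull_tail {x : ℕ → E} {u : E}
    (hu : ∀ m, u ∈ closure (convexHull ℝ (x '' Set.Ici m))) (f : E →L[ℝ] ℝ) {c : ℝ}
    (hc : Tendsto (fun n => f (x n)) atTop (𝓝 c)) : f u = c := by
  refine eq_of_forall_dist_le fun ε hε => ?_
  obtain ⟨N, hN⟩ := eventually_atTop.1 (hc.eventually (Metric.closedBall_mem_nhds c hε))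
  have : closure (convexHull ℝ (x '' Set.Ici N)) ⊆ f ⁻¹' Metric.closedBall c ε :=
    closure_minimal (convexHull_min (by rintro _ ⟨n, hn, rfl⟩; exact hN n hn)
      ((convex_closedBall c ε).linear_preimage f.toLinearMap))
      (Metric.isClosed_closedBall.preimage f.continuous)
  exact this (hu N)

/-- A separable set admits a sequence of continuous functionals detecting whether its elements
vanish. -/
theorem exists_seq_dual_separating_of_isSeparable {Y : Set E} (hY : TopologicalSpace.IsSeparable Y) :
    ∃ g : ℕ → E →L[ℝ] ℝ, ∀ w ∈ Y, (∀ k, g k w = 0) → w = 0 := by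
  obtain ⟨c, hcc, hYc⟩ := hY
  rcases c.eq_empty_or_nonempty with rfl | hcne
  · exact ⟨0, fun w hw => by simpa using hYc hw⟩
  obtain ⟨y, rfl⟩ := hcc.exists_eq_range hcne
  choose g hg hgy using fun k => exists_dual_vector'' ℝ (y k)
  refine ⟨g, fun w hw h0 => norm_le_zero_iff.1 (le_of_forall_pos_le_add fun ε hε => ?_)⟩
  obtain ⟨_, ⟨k, rfl⟩, hk⟩ := Metric.mem_closure_iff.1 (hYc hw) (ε / 2) (by positivity)
  rw [dist_eq_norm] at hk
  have hyk : ‖y k‖ ≤ ‖w - y k‖ :=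
    calc ‖y k‖ = g k (y k - w) := by rw [map_sub, h0 k, sub_zero, hgy]; rfl
      _ ≤ ‖g k (y k - w)‖ := le_abs_self _
      _ ≤ ‖y k - w‖ := (g k).le_of_opNorm_le_of_le (hg k) le_rfl |>.trans (by simp)
      _ = ‖w - y k‖ := norm_sub_rev _ _
  have : ‖w‖ ≤ ‖w - y k‖ + ‖y k‖ := by simpa using norm_add_le (w - y k) (y k)
  linarith

/-- A bounded sequence has a subsequence along which countably many given functionals converge. -/
theorem exists_subseq_tendsto_seq_dual {x : ℕ → E} {M : ℝ} (hM : ∀ n, ‖x n‖ ≤ M)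
    (g : ℕ → E →L[ℝ] ℝ) : ∃ (c : ℕ → ℝ) (φ : ℕ → ℕ), StrictMono φ ∧
      ∀ k, Tendsto (fun n => g k (x (φ n))) atTop (𝓝 (c k)) := by
  obtain ⟨c, -, φ, hφ, hc⟩ := (isCompact_univ_pi fun k : ℕ =>
    isCompact_closedBall (0 : ℝ) (‖g k‖ * M)).tendsto_subseq (x := fun n k => g k (x n))
      (fun n k _ => by simpa using (g k).le_opNorm_of_le (hM n))
  exact ⟨c, φ, hφ, tendsto_pi_nhds.1 hc⟩

/-- Every bounded sequence in a uniformly convex Banach space has a weakly convergent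
subsequence. -/
theorem exists_subseq_weak_tendsto_of_bounded [UniformConvexSpace E] [CompleteSpace E] {x : ℕ → E}
    {M : ℝ} (hM : ∀ n, ‖x n‖ ≤ M) : ∃ (u : E) (φ : ℕ → ℕ), StrictMono φ ∧
      ∀ f : E →L[ℝ] ℝ, Tendsto (fun n => f (x (φ n))) atTop (𝓝 (f u)) := by
  set Y : Submodule ℝ E := (Submodule.span ℝ (Set.range x)).topologicalClosure
  have hYsep : TopologicalSpace.IsSeparable (Y : Set E) := by
    rw [Submodule.topologicalClosure_coe]
    exact ((Set.countable_range x).isSeparable.span).closure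
  obtain ⟨g, hg⟩ := exists_seq_dual_separating_of_isSeparable hYsep
  obtain ⟨c, φ, hφ, hc⟩ := exists_subseq_tendsto_seq_dual hM g
  have htail : ∀ (ψ : ℕ → ℕ) (w : E),
      w ∈ closure (convexHull ℝ ((fun n => x (ψ n)) '' Set.Ici 0)) → w ∈ Y := fun ψ w hw => by
    refine closure_minimal (convexHull_min ?_ Y.convex)
      (Submodule.isClosed_topologicalClosure _) hw
    rintro _ ⟨n, -, rfl⟩
    exact Submodule.le_topologicalClosure _ (Submodule.subset_span ⟨_, rfl⟩)
  obtain ⟨u, hu⟩ := exists_forall_mem_closure_convexHull_tail fun n => hM (φ n)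
  refine ⟨u, φ, hφ, fun f => tendsto_of_subseq_tendsto fun ns hns => ?_⟩
  obtain ⟨b, -, ms, hms, hb⟩ := (isCompact_closedBall (0 : ℝ) (‖f‖ * M)).tendsto_subseq
    (x := fun n => f (x (φ (ns n)))) (fun n => by simpa using f.le_opNorm_of_le (hM _))
  obtain ⟨v, hv⟩ := exists_forall_mem_closure_convexHull_tail fun n => hM (φ (ns (ms n)))
  have huv : v = u := by
    refine sub_eq_zero.1 (hg _ (Y.sub_mem (htail (fun n => φ (ns (ms n))) v (hv 0))
      (htail φ u (hu 0))) fun k => ?_)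
    rw [map_sub, eq_of_mem_closure_convexHull_tail hu (g k) (hc k),
      eq_of_mem_closure_convexHull_tail hv (g k) ((hc k).comp (hns.comp hms.tendsto_atTop)),
      sub_self]
  refine ⟨ms, ?_⟩
  rw [← huv, eq_of_mem_closure_convexHull_tail hv f hb]
  exact hb

/-- A closed convex set contains the weak limits of its sequences. -/
theorem mem_of_weak_tendsto_of_isClosed_convex {C : Set E} (hcl : IsClosed C) (hcv : Convex ℝ C)
    {x : ℕ → E} (hx : ∀ n, x n ∈ C) {u : E}
    (hu : ∀ f : E →L[ℝ] ℝ, Tendsto (fun n => f (x n)) atTop (𝓝 (f u))) : u ∈ C := by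
  by_contra h
  obtain ⟨f, s, hfs, hsu⟩ := geometric_hahn_banach_closed_point hcv hcl h
  exact hsu.not_ge (le_of_tendsto' (hu f) fun n => (hfs _ (hx n)).le)

end Weak

section Hybrid

variable {E : Type*} [NormedAddCommGroup E]

/-- A hybrid mapping does not increase the distance to its fixed points. -/
theorem norm_sub_le_of_hybrid {C : Set E} {T : E → E}
    (hT : ∀ x ∈ C, ∀ y ∈ C,
      3 * ‖T x - T y‖ ^ 2 ≤ ‖x - y‖ ^ 2 + ‖T x - y‖ ^ 2 + ‖T y - x‖ ^ 2)
    {z p : E} (hz : z ∈ C) (hp : p ∈ C) (hfix : T p = p) : ‖T z - p‖ ≤ ‖z - p‖ := by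
  have h := hT z hz p hp
  rw [hfix, norm_sub_rev p z] at h
  exact le_of_sq_le_sq (by linarith) (norm_nonneg _)

/-- A hybrid mapping almost does not increase the distance to its almost fixed points. -/
theorem norm_sub_map_le_of_hybrid {C : Set E} {T : E → E}
    (hT : ∀ x ∈ C, ∀ y ∈ C,
      3 * ‖T x - T y‖ ^ 2 ≤ ‖x - y‖ ^ 2 + ‖T x - y‖ ^ 2 + ‖T y - x‖ ^ 2)
    {z u : E} (hz : z ∈ C) (hu : u ∈ C) : ‖z - T u‖ ≤ ‖z - u‖ + 4 * ‖z - T z‖ := by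
  have h := hT z hz u hu
  rw [norm_sub_rev (T u) z] at h
  have hA : ‖z - T u‖ ≤ ‖z - T z‖ + ‖T z - T u‖ := norm_sub_le_norm_sub_add_norm_sub _ _ _
  have hQ : ‖T z - u‖ ≤ ‖z - T z‖ + ‖z - u‖ := by
    rw [norm_sub_rev z (T z)]
    exact norm_sub_le_norm_sub_add_norm_sub _ _ _
  have hB0 := norm_nonneg (z - u)
  have he0 := norm_nonneg (z - T z)
  have hQ0 := norm_nonneg (T z - u)
  generalize ‖z - T u‖ = A at *
  generalize ‖z - u‖ = B at *
  generalize ‖z - T z‖ = e at *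
  generalize ‖T z - T u‖ = P at *
  generalize ‖T z - u‖ = Q at *
  by_contra! hcon
  have hP2 : (A - e) ^ 2 ≤ P ^ 2 := by gcongr <;> linarith
  have hQ2 : Q ^ 2 ≤ (e + B) ^ 2 := by gcongr
  have hA0 : 0 < A := by linarith
  nlinarith [mul_pos hA0 (sub_pos.2 hcon), mul_nonneg hB0 (sub_nonneg.2 hcon.le)]

end Hybrid

section Opial

variable {E : Type*} [NormedAddCommGroup E] [NormedSpace ℝ E]

/-- Under Opial's condition, a weak limit of asymptotically fixed points of a hybrid mapping is a
fixed point. -/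
theorem isFixed_of_weak_tendsto_of_hybrid
    (hOpial : ∀ (z : ℕ → E) (u : E),
      (∀ f : E →L[ℝ] ℝ, Tendsto (fun n => f (z n)) atTop (𝓝 (f u))) →
      ∀ v : E, v ≠ u →
        Filter.liminf (fun n => ‖z n - u‖) atTop < Filter.liminf (fun n => ‖z n - v‖) atTop)
    {C : Set E} {T : E → E}
    (hT : ∀ x ∈ C, ∀ y ∈ C,
      3 * ‖T x - T y‖ ^ 2 ≤ ‖x - y‖ ^ 2 + ‖T x - y‖ ^ 2 + ‖T y - x‖ ^ 2)
    {z : ℕ → E} {u : E} {M : ℝ} (hz : ∀ n, z n ∈ C) (hM : ∀ n, ‖z n‖ ≤ M) (huC : u ∈ C)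
    (hu : ∀ f : E →L[ℝ] ℝ, Tendsto (fun n => f (z n)) atTop (𝓝 (f u)))
    (hzT : Tendsto (fun n => ‖z n - T (z n)‖) atTop (𝓝 0)) : T u = u := by
  by_contra hne
  obtain ⟨c, hc, hcT⟩ := exists_between (hOpial z u hu (T u) hne)
  obtain ⟨c', hc', hcT'⟩ := exists_between hcT
  have hbdd : IsBoundedUnder (· ≤ ·) atTop fun n => ‖z n - u‖ :=
    isBoundedUnder_of ⟨M + ‖u‖, fun n => (norm_sub_le _ _).trans (by linarith [hM n])⟩
  have hfreq := frequently_lt_of_liminf_lt hbdd.isCoboundedUnder_ge hc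
  have hlow : IsBoundedUnder (· ≥ ·) atTop fun n => ‖z n - T u‖ :=
    isBoundedUnder_of ⟨0, fun n => norm_nonneg _⟩
  obtain ⟨n, h1, h2, h3⟩ := (hfreq.and_eventually ((eventually_lt_of_lt_liminf hcT' hlow).and
    (hzT.eventually (gt_mem_nhds (show 0 < (c' - c) / 4 by linarith))))).exists
  linarith [norm_sub_map_le_of_hybrid hT (hz n) huC]

/-- Under Opial's condition, two weak subsequential limits to which the distance of the sequence
converges coincide. -/
theorem eq_of_weak_tendsto_subseq
    (hOpial : ∀ (z : ℕ → E) (u : E),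
      (∀ f : E →L[ℝ] ℝ, Tendsto (fun n => f (z n)) atTop (𝓝 (f u))) →
      ∀ v : E, v ≠ u →
        Filter.liminf (fun n => ‖z n - u‖) atTop < Filter.liminf (fun n => ‖z n - v‖) atTop)
    {x : ℕ → E} {u v : E} {c d : ℝ} (hc : Tendsto (fun n => ‖x n - u‖) atTop (𝓝 c))
    (hd : Tendsto (fun n => ‖x n - v‖) atTop (𝓝 d)) {φ ψ : ℕ → ℕ} (hφ : Tendsto φ atTop atTop)
    (hψ : Tendsto ψ atTop atTop)
    (hu : ∀ f : E →L[ℝ] ℝ, Tendsto (fun n => f (x (φ n))) atTop (𝓝 (f u)))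
    (hv : ∀ f : E →L[ℝ] ℝ, Tendsto (fun n => f (x (ψ n))) atTop (𝓝 (f v))) : u = v := by
  by_contra hne
  have hcd : c < d :=
    (hc.comp hφ).liminf_eq ▸ (hd.comp hφ).liminf_eq ▸ hOpial _ u hu v (Ne.symm hne)
  have hdc : d < c := (hd.comp hψ).liminf_eq ▸ (hc.comp hψ).liminf_eq ▸ hOpial _ v hv u hne
  exact hcd.not_gt hdc

end Opial

/-- Let `E` be a uniformly convex real Banach space satisfying Opial's
condition, `C` a nonempty closed convex subset of `E`, and `T` a hybrid self-mapping of `C`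
(i.e. `3‖Tx−Ty‖² ≤ ‖x−y‖² + ‖Tx−y‖² + ‖Ty−x‖²`) with a fixed point. Then the Ishikawa
iteration (with `λₙ ∈ [0,1]`, `γₙ ∈ [a,1]`, `0 < a ≤ 1`, `liminf λₙ(1−λₙ) > 0`) converges
weakly to a fixed point of `T`. -/
theorem ishikawa_hybrid_weak_convergence
    {E : Type*} [NormedAddCommGroup E] [NormedSpace ℝ E] [CompleteSpace E]
    [UniformConvexSpace E]
    (hOpial : ∀ (z : ℕ → E) (u : E),
      (∀ f : E →L[ℝ] ℝ, Tendsto (fun n => f (z n)) atTop (𝓝 (f u))) →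
      ∀ v : E, v ≠ u →
        Filter.liminf (fun n => ‖z n - u‖) atTop < Filter.liminf (fun n => ‖z n - v‖) atTop)
    (C : Set E) (hCne : C.Nonempty) (hCcl : IsClosed C) (hCcv : Convex ℝ C)
    (T : E → E) (hTself : Set.MapsTo T C C)
    (hhybrid : ∀ x ∈ C, ∀ y ∈ C,
      3 * ‖T x - T y‖ ^ 2 ≤ ‖x - y‖ ^ 2 + ‖T x - y‖ ^ 2 + ‖T y - x‖ ^ 2)
    (hF : ∃ p ∈ C, T p = p)
    (a : ℝ) (ha0 : 0 < a) (ha1 : a ≤ 1)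
    (lam gam : ℕ → ℝ)
    (hlam : ∀ n, lam n ∈ Set.Icc (0 : ℝ) 1) (hgam : ∀ n, gam n ∈ Set.Icc a 1)
    (hliminf : 0 < Filter.liminf (fun n => lam n * (1 - lam n)) atTop)
    (x y : ℕ → E) (x₀ : E) (hx₀ : x₀ ∈ C) (hinit : x 0 = x₀)
    (hy : ∀ n, y n = (1 - lam n) • x n + lam n • T (x n))
    (hxs : ∀ n, x (n + 1) = (1 - gam n) • x n + gam n • T (y n)) :
    ∃ p ∈ C, T p = p ∧
      ∀ f : E →L[ℝ] ℝ, Tendsto (fun n => f (x n)) atTop (𝓝 (f p)) := by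
  have hmem : ∀ n, x n ∈ C ∧ y n ∈ C := by
    have hyC : ∀ n, x n ∈ C → y n ∈ C := fun n hn => by
      rw [hy]
      exact hCcv hn (hTself hn) (sub_nonneg.2 (hlam n).2) (hlam n).1 (by ring)
    have hxC : ∀ n, x n ∈ C := fun n => by
      induction n with
      | zero => rwa [hinit]
      | succ n ih =>
        rw [hxs]
        exact hCcv ih (hTself (hyC n ih)) (sub_nonneg.2 (hgam n).2) (ha0.le.trans (hgam n).1)
          (by ring)
    exact fun n => ⟨hxC n, hyC n (hxC n)⟩
  have hycomb : ∀ p n, y n - p = (1 - lam n) • (x n - p) + lam n • (T (x n) - p) := fun p n => by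
    rw [hy]
    module
  have hTx : ∀ p ∈ C, T p = p → ∀ n, ‖T (x n) - p‖ ≤ ‖x n - p‖ := fun p hp hfix n =>
    norm_sub_le_of_hybrid hhybrid (hmem n).1 hp hfix
  have hyx : ∀ p ∈ C, T p = p → ∀ n, ‖y n - p‖ ≤ ‖x n - p‖ := fun p hp hfix n => by
    rw [hycomb]
    refine (norm_add_le _ _).trans ?_
    rw [norm_smul_of_nonneg (sub_nonneg.2 (hlam n).2), norm_smul_of_nonneg (hlam n).1]
    linarith [mul_le_mul_of_nonneg_left (hTx p hp hfix n) (hlam n).1]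
  have hstep : ∀ p ∈ C, T p = p → ∀ n,
      a * (‖x n - p‖ - ‖y n - p‖) ≤ ‖x n - p‖ - ‖x (n + 1) - p‖ := fun p hp hfix n => by
    have hg0 : 0 ≤ gam n := ha0.le.trans (hgam n).1
    have hxcomb : x (n + 1) - p = (1 - gam n) • (x n - p) + gam n • (T (y n) - p) := by
      rw [hxs]
      module
    have hle : ‖x (n + 1) - p‖ ≤ (1 - gam n) * ‖x n - p‖ + gam n * ‖T (y n) - p‖ := by
      rw [hxcomb]
      refine (norm_add_le _ _).trans ?_
      rw [norm_smul_of_nonneg (sub_nonneg.2 (hgam n).2), norm_smul_of_nonneg hg0]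
    linarith [mul_le_mul_of_nonneg_left
        (norm_sub_le_of_hybrid hhybrid (hmem n).2 hp hfix) hg0,
      mul_le_mul_of_nonneg_right (hgam n).1 (sub_nonneg.2 (hyx p hp hfix n))]
  have hanti : ∀ p ∈ C, T p = p → Antitone fun n => ‖x n - p‖ := fun p hp hfix =>
    antitone_nat_of_succ_le fun n => by
      have := mul_nonneg ha0.le (sub_nonneg.2 (hyx p hp hfix n))
      linarith [hstep p hp hfix n]
  have hlim : ∀ p ∈ C, T p = p → ∃ d, Tendsto (fun n => ‖x n - p‖) atTop (𝓝 d) :=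
    fun p hp hfix => ⟨_, tendsto_atTop_ciInf (hanti p hp hfix)
      ⟨0, by rintro _ ⟨n, rfl⟩; exact norm_nonneg _⟩⟩
  obtain ⟨q, hqC, hq⟩ := hF
  have hbdd : ∀ n, ‖x n‖ ≤ ‖x 0 - q‖ + ‖q‖ := fun n => by
    have h1 : ‖x n‖ ≤ ‖x n - q‖ + ‖q‖ := by simpa using norm_add_le (x n - q) q
    linarith [hanti q hqC hq n.zero_le]
  have hxT : Tendsto (fun n => ‖x n - T (x n)‖) atTop (𝓝 0) := by
    obtain ⟨d, hd⟩ := hlim q hqC hq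
    have hyd : Tendsto (fun n => ‖y n - q‖) atTop (𝓝 d) := by
      have hlow : Tendsto (fun n => ‖x n - q‖ - (‖x n - q‖ - ‖x (n + 1) - q‖) / a) atTop
          (𝓝 (d - (d - d) / a)) :=
        hd.sub ((hd.sub (hd.comp (tendsto_add_atTop_nat 1))).div_const a)
      rw [sub_self, zero_div, sub_zero] at hlow
      refine tendsto_of_tendsto_of_tendsto_of_le_of_le hlow hd (fun n => ?_) (hyx q hqC hq)
      have := (le_div_iff₀' ha0).2 (hstep q hqC hq n)
      simp only
      linarith
    obtain ⟨b, hb0, hb⟩ := exists_between hliminf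
    have hlow : IsBoundedUnder (· ≥ ·) atTop fun n => lam n * (1 - lam n) :=
      isBoundedUnder_of ⟨0, fun n => mul_nonneg (hlam n).1 (sub_nonneg.2 (hlam n).2)⟩
    have := tendsto_norm_sub_zero_of_tendsto_norm_convex_comb hb0 hlam
      ((eventually_lt_of_lt_liminf hb hlow).mono fun n hn => hn.le) hd (hTx q hqC hq)
      (by simpa only [hycomb] using hyd)
    simpa only [sub_sub_sub_cancel_right] using this
  have hcluster : ∀ ns : ℕ → ℕ, Tendsto ns atTop atTop → ∃ p ∈ C, T p = p ∧
      ∃ ms : ℕ → ℕ, Tendsto ms atTop atTop ∧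
        ∀ f : E →L[ℝ] ℝ, Tendsto (fun n => f (x (ns (ms n)))) atTop (𝓝 (f p)) := fun ns hns => by
    obtain ⟨p, ms, hms, hp⟩ := exists_subseq_weak_tendsto_of_bounded fun n => hbdd (ns n)
    have hpC : p ∈ C := mem_of_weak_tendsto_of_isClosed_convex hCcl hCcv (fun n => (hmem _).1) hp
    exact ⟨p, hpC, isFixed_of_weak_tendsto_of_hybrid hOpial hhybrid (fun n => (hmem _).1)
      (fun n => hbdd _) hpC hp (hxT.comp (hns.comp hms.tendsto_atTop)), ms, hms.tendsto_atTop, hp⟩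
  obtain ⟨p, hpC, hp, φ, hφ, hpφ⟩ := hcluster id tendsto_id
  refine ⟨p, hpC, hp, fun f => tendsto_of_subseq_tendsto fun ns hns => ?_⟩
  obtain ⟨v, hvC, hv, ms, hms, hvm⟩ := hcluster ns hns
  obtain ⟨c, hc⟩ := hlim p hpC hp
  obtain ⟨d, hd⟩ := hlim v hvC hv
  refine ⟨ms, ?_⟩
  rw [eq_of_weak_tendsto_subseq hOpial hc hd hφ (hns.comp hms) hpφ hvm]
  exact hvm f
end

section
/- Let E be a uniformly convex real Banach space satisfying Opial's condition, C a nonempty closed convex subset of E, and T a nonspreading self-mapping of C with nonempty fixed point set F(T). Let {λₙ} ⊆ [0,1] and {γₙ} ⊆ [a,1] with 0 < a ≤ 1, suppose liminf λₙ(1−λₙ) > 0, and define the Ishikawa sequence by x₁ = x ∈ C, yₙ = (1−λₙ)xₙ + λₙTxₙ, x_{n+1} = (1−γₙ)xₙ + γₙTyₙ. Then {xₙ} converges weakly to some point x₀ ∈ F(T). -/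
open Filter Topology

theorem exists_pos_forall_norm_add_le_two_mul_sub {E : Type*} [NormedAddCommGroup E]
    [NormedSpace ℝ E] [UniformConvexSpace E] {ε : ℝ} (hε : 0 < ε) (M : ℝ) :
    ∃ δ > 0, ∀ R ≤ M, ∀ u v : E, ‖u‖ ≤ R → ‖v‖ ≤ R → ε ≤ ‖u - v‖ → ‖u + v‖ ≤ 2 * R - δ := by
  have hM : 0 < max M 1 := lt_max_of_lt_right one_pos
  obtain ⟨δ, hδ, h⟩ := exists_forall_closed_ball_dist_add_le_two_sub E (div_pos hε hM)
  refine ⟨ε / 2 * δ, by positivity, fun R hR u v hu hv huv => ?_⟩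
  have hεR : ε ≤ 2 * R := by linarith [norm_sub_le u v]
  have hR0 : 0 < R := by linarith
  have hscale (z : E) : ‖R⁻¹ • z‖ = ‖z‖ / R := by
    rw [norm_smul, norm_inv, Real.norm_of_nonneg hR0.le, div_eq_inv_mul]
  have key : ‖R⁻¹ • u + R⁻¹ • v‖ ≤ 2 - δ := by
    refine h ?_ ?_ ?_
    · rw [hscale]; exact (div_le_one hR0).2 hu
    · rw [hscale]; exact (div_le_one hR0).2 hv
    · rw [← smul_sub, hscale]
      exact div_le_div₀ (norm_nonneg _) huv hR0 (hR.trans (le_max_left _ _))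
  rw [← smul_add, hscale, div_le_iff₀ hR0] at key
  nlinarith

/-- In a uniformly convex Banach space, the closed convex members of a filter that contains a
bounded set have a common point. -/
theorem exists_forall_mem_of_isClosed_convex {E : Type*} [NormedAddCommGroup E]
    [NormedSpace ℝ E] [CompleteSpace E] [UniformConvexSpace E] (F : Filter E) [F.NeBot] {r : ℝ}
    (hr : Metric.closedBall 0 r ∈ F) :
    ∃ u, ∀ K ∈ F, IsClosed K → Convex ℝ K → u ∈ K := by
  let S : Set (Set E) := {K | K ∈ F ∧ IsClosed K ∧ Convex ℝ K}
  have hne (K : S) : (K : Set E).Nonempty := F.nonempty_of_mem K.2.1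
  have huniv : Set.univ ∈ S := ⟨univ_mem, isClosed_univ, convex_univ⟩
  have : Nonempty S := ⟨⟨_, huniv⟩⟩
  let D : S → ℝ := fun K => Metric.infDist 0 (K : Set E)
  have hbdd : BddAbove (Set.range D) := by
    refine ⟨r, ?_⟩
    rintro _ ⟨K, rfl⟩
    obtain ⟨z, hzK, hzr⟩ := F.nonempty_of_mem (inter_mem K.2.1 hr)
    refine (Metric.infDist_le_dist_of_mem hzK).trans ?_
    rw [dist_comm]; exact hzr
  let d : ℝ := ⨆ K, D K
  have hmeet (K : S) (s : Set.Ioi d) :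
      ((K : Set E) ∩ Metric.closedBall 0 (s : ℝ)).Nonempty := by
    obtain ⟨z, hz, hzs⟩ := (Metric.infDist_lt_iff (hne K)).1 ((le_ciSup hbdd K).trans_lt s.2)
    exact ⟨z, hz, by rw [Metric.mem_closedBall, dist_comm]; exact hzs.le⟩
  have : Nonempty (Set.Ioi d) := ⟨⟨d + 1, by simp⟩⟩
  let B : S × Set.Ioi d → Set E := fun i => (i.1 : Set E) ∩ Metric.closedBall 0 (i.2 : ℝ)
  let G : Filter E := ⨅ i, 𝓟 (B i)
  have hBG (i : S × Set.Ioi d) : B i ∈ G := mem_iInf_of_mem i (mem_principal_self _)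
  have hG : G.NeBot := by
    refine iInf_neBot_of_directed' ?_ fun i => principal_neBot_iff.2 (hmeet i.1 i.2)
    rintro ⟨K, s⟩ ⟨L, t⟩
    refine ⟨⟨⟨K ∩ L, inter_mem K.2.1 L.2.1, K.2.2.1.inter L.2.2.1, K.2.2.2.inter L.2.2.2⟩,
      min s t⟩, ?_, ?_⟩
    · refine principal_mono.2 (Set.inter_subset_inter Set.inter_subset_left ?_)
      exact Metric.closedBall_subset_closedBall (Subtype.coe_le_coe.2 (min_le_left s t))
    · refine principal_mono.2 (Set.inter_subset_inter Set.inter_subset_right ?_)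
      exact Metric.closedBall_subset_closedBall (Subtype.coe_le_coe.2 (min_le_right s t))
  have hcauchy : Cauchy G := by
    refine Metric.cauchy_iff.2 ⟨hG, fun ε hε => ?_⟩
    obtain ⟨δ, hδ, h⟩ := exists_pos_forall_norm_add_le_two_mul_sub (E := E) hε (d + 1)
    obtain ⟨K, hK⟩ := exists_lt_of_lt_ciSup (show d - δ / 8 < ⨆ K, D K by
      change d - δ / 8 < d; linarith)
    have hη : 0 < min (δ / 8) 1 := by positivity
    refine ⟨_, hBG ⟨K, ⟨d + min (δ / 8) 1, by simpa using hδ⟩⟩, ?_⟩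
    rintro z ⟨hzK, hz⟩ w ⟨hwK, hw⟩
    by_contra! hzw
    rw [dist_eq_norm] at hzw
    rw [mem_closedBall_zero_iff] at hz hw
    have hsum := h _ (by linarith [min_le_right (δ / 8) 1]) z w hz hw hzw
    have hmid : (2⁻¹ : ℝ) • z + (2⁻¹ : ℝ) • w ∈ (K : Set E) :=
      K.2.2.2 hzK hwK (by norm_num) (by norm_num) (by norm_num)
    have hle := Metric.infDist_le_dist_of_mem (x := (0 : E)) hmid
    rw [dist_zero_left, ← smul_add, norm_smul, Real.norm_of_nonneg (by norm_num)] at hle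
    change d - δ / 8 < Metric.infDist 0 (K : Set E) at hK
    have := min_le_left (δ / 8) 1
    linarith
  obtain ⟨u, hu⟩ := CompleteSpace.complete hcauchy
  refine ⟨u, fun K hKF hKcl hKcv => ?_⟩
  have hKG : K ∈ G :=
    mem_of_superset (hBG ⟨⟨K, hKF, hKcl, hKcv⟩, Classical.arbitrary _⟩) Set.inter_subset_left
  exact hKcl.mem_of_tendsto (b := G) (f := id) hu hKG

theorem Ultrafilter.exists_tendsto_of_norm_le {ι E : Type*} [NormedAddCommGroup E]
    [NormedSpace ℝ E] [CompleteSpace E] [UniformConvexSpace E] (U : Ultrafilter ι) {x : ι → E}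
    {r : ℝ} (hr : ∀ i, ‖x i‖ ≤ r) :
    ∃ u, (∀ K, IsClosed K → Convex ℝ K → (∀ i, x i ∈ K) → u ∈ K) ∧
      ∀ f : E →L[ℝ] ℝ, Tendsto (fun i => f (x i)) U (𝓝 (f u)) := by
  obtain ⟨u, hu⟩ := exists_forall_mem_of_isClosed_convex (Filter.map x U) (r := r)
    (Filter.mem_map.2 (Eventually.of_forall fun i => mem_closedBall_zero_iff.2 (hr i)))
  refine ⟨u, fun K hcl hcv hK => hu K (Filter.mem_map.2 (Eventually.of_forall hK)) hcl hcv,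
    fun f => ?_⟩
  obtain ⟨l, -, hl⟩ := (isCompact_closedBall (0 : ℝ) (‖f‖ * r)).ultrafilter_le_nhds
    (U.map fun i => f (x i)) (le_principal_iff.2 (Filter.mem_map.2 (Eventually.of_forall fun i =>
      mem_closedBall_zero_iff.2 ((f.le_opNorm _).trans
        (mul_le_mul_of_nonneg_left (hr i) (norm_nonneg f))))))
  have hlim : Tendsto (fun i => f (x i)) U (𝓝 l) := hl
  suffices f u = l by rwa [this]
  refine eq_of_forall_dist_le fun ε hε => ?_
  exact hu (f ⁻¹' Metric.closedBall l ε) (hlim (Metric.closedBall_mem_nhds l hε))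
    (Metric.isClosed_closedBall.preimage f.continuous)
    ((convex_closedBall l ε).linear_preimage f.toLinearMap)

theorem exists_countable_separating_dual {E : Type*} [NormedAddCommGroup E] [NormedSpace ℝ E]
    {s : Set E} (hs : TopologicalSpace.IsSeparable s) :
    ∃ c : Set E, c.Countable ∧ ∃ g : c → E →L[ℝ] ℝ, ∀ v ∈ s, (∀ k, g k v = 0) → v = 0 := by
  obtain ⟨c, hc, hsc⟩ := hs
  choose g hg1 hg using fun k : c => exists_dual_vector'' ℝ (k : E)
  refine ⟨c, hc, g, fun v hv h0 => norm_le_zero_iff.1 (le_of_forall_pos_le_add fun ε hε => ?_)⟩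
  obtain ⟨k, hk, hvk⟩ := Metric.mem_closure_iff.1 (hsc hv) (ε / 2) (half_pos hε)
  have h1 : ‖k‖ ≤ ‖v - k‖ := by
    have h2 := (g ⟨k, hk⟩).le_of_opNorm_le (hg1 _) (v - k)
    rw [map_sub, h0, hg] at h2
    simpa using h2
  rw [dist_eq_norm] at hvk
  linarith [norm_sub_norm_le v k]

/-- Weak sequential compactness of bounded sequences in a uniformly convex Banach space. -/
theorem exists_subseq_weak_tendsto {E : Type*} [NormedAddCommGroup E] [NormedSpace ℝ E]
    [CompleteSpace E] [UniformConvexSpace E] {x : ℕ → E} {r : ℝ} (hr : ∀ n, ‖x n‖ ≤ r) :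
    ∃ u, ∃ φ : ℕ → ℕ, StrictMono φ ∧ (∀ K, IsClosed K → Convex ℝ K → (∀ n, x n ∈ K) → u ∈ K) ∧
      ∀ f : E →L[ℝ] ℝ, Tendsto (fun n => f (x (φ n))) atTop (𝓝 (f u)) := by
  let Y : Submodule ℝ E := (Submodule.span ℝ (Set.range x)).topologicalClosure
  have hYcl : IsClosed (Y : Set E) := Submodule.isClosed_topologicalClosure _
  have hxY (n : ℕ) : x n ∈ Y :=
    Submodule.le_topologicalClosure _ (Submodule.subset_span (Set.mem_range_self n))
  have hYsep : TopologicalSpace.IsSeparable (Y : Set E) :=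
    ((Set.countable_range x).isSeparable.span (R := ℝ)).closure
  obtain ⟨c, hc, g, hg⟩ := exists_countable_separating_dual hYsep
  have := hc.to_subtype
  obtain ⟨l, -, φ, hφ, hl⟩ :=
    (isCompact_univ_pi fun k : c => isCompact_closedBall (0 : ℝ) (‖g k‖ * r)).tendsto_subseq
      (x := fun n k => g k (x n)) (fun n k _ => mem_closedBall_zero_iff.2
        (((g k).le_opNorm _).trans (mul_le_mul_of_nonneg_left (hr n) (norm_nonneg _))))
  have hl' (k : c) : Tendsto (fun n => g k (x (φ n))) atTop (𝓝 (l k)) := tendsto_pi_nhds.1 hl k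
  have hlim (U : Ultrafilter ℕ) := U.exists_tendsto_of_norm_le fun n => hr (φ n)
  obtain ⟨u, huK, hu⟩ := hlim (Ultrafilter.of atTop)
  refine ⟨u, φ, hφ, fun K hcl hcv hK => huK K hcl hcv fun n => hK _, fun f => ?_⟩
  refine (tendsto_iff_ultrafilter _ _ _).2 fun U hU => ?_
  obtain ⟨v, hvK, hv⟩ := hlim U
  suffices v - u = 0 by rw [← sub_eq_zero.1 this]; exact hv f
  refine hg _ (Y.sub_mem (hvK Y hYcl Y.convex fun n => hxY _)
    (huK Y hYcl Y.convex fun n => hxY _)) fun k => ?_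
  rw [map_sub, tendsto_nhds_unique (hv (g k)) ((hl' k).mono_left hU),
    tendsto_nhds_unique (hu (g k)) ((hl' k).mono_left (Ultrafilter.of_le _)), sub_self]

theorem exists_pos_forall_norm_convexCombination_le {E : Type*} [NormedAddCommGroup E]
    [NormedSpace ℝ E] [UniformConvexSpace E] {ε : ℝ} (hε : 0 < ε) (M : ℝ) :
    ∃ δ > 0, ∀ R ≤ M, ∀ u v : E, ‖u‖ ≤ R → ‖v‖ ≤ R → ε ≤ ‖u - v‖ →
      ∀ t ∈ Set.Icc (0 : ℝ) 1, ‖(1 - t) • u + t • v‖ ≤ R - t * (1 - t) * δ := by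
  obtain ⟨δ, hδ, h⟩ := exists_pos_forall_norm_add_le_two_mul_sub (E := E) hε M
  refine ⟨δ, hδ, fun R hR u v hu hv huv t ht => ?_⟩
  have hsum := h R hR u v hu hv huv
  obtain ⟨ht0, ht1⟩ := ht
  have hbound {s : ℝ} {w : E} (hs0 : 0 ≤ s) (hs : s ≤ 1 / 2) (hw : ‖w‖ ≤ R) :
      ‖s • (u + v) + (1 - 2 * s) • w‖ ≤ R - s * δ := by
    refine (norm_add_le _ _).trans ?_
    rw [norm_smul, norm_smul, Real.norm_of_nonneg hs0, Real.norm_of_nonneg (by linarith)]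
    nlinarith [mul_le_mul_of_nonneg_left hsum hs0,
      mul_le_mul_of_nonneg_left hw (show 0 ≤ 1 - 2 * s by linarith)]
  have hmul : 0 ≤ t * δ ∧ 0 ≤ (1 - t) * δ :=
    ⟨by positivity, mul_nonneg (by linarith) hδ.le⟩
  rcases le_total t (1 / 2) with h2 | h2
  · rw [show (1 - t) • u + t • v = t • (u + v) + (1 - 2 * t) • u by module]
    nlinarith [hbound ht0 h2 hu]
  · rw [show (1 - t) • u + t • v = (1 - t) • (u + v) + (1 - 2 * (1 - t)) • v by module]
    nlinarith [hbound (s := 1 - t) (by linarith) (by linarith) hv]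

theorem norm_sub_le_of_nonspreading {E : Type*} [NormedAddCommGroup E] {T : E → E} {z u : E}
    (h : 2 * ‖T z - T u‖ ^ 2 ≤ ‖T z - u‖ ^ 2 + ‖T u - z‖ ^ 2) :
    ‖z - T u‖ ≤ ‖z - u‖ + 5 * ‖z - T z‖ := by
  have h1 : ‖z - T u‖ ≤ ‖z - T z‖ + ‖T z - T u‖ := norm_sub_le_norm_sub_add_norm_sub _ _ _
  have h2 : ‖T z - u‖ ≤ ‖z - T z‖ + ‖z - u‖ := by
    rw [norm_sub_rev z (T z)]; exact norm_sub_le_norm_sub_add_norm_sub _ _ _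
  rw [norm_sub_rev (T u) z] at h
  have h3 : ‖T z - u‖ ^ 2 ≤ (‖z - T z‖ + ‖z - u‖) ^ 2 := by gcongr
  have h4 : ‖z - T u‖ ^ 2 ≤ (‖z - T z‖ + ‖T z - T u‖) ^ 2 := by gcongr
  have h5 : ‖T z - T u‖ - ‖z - T z‖ ≤ 3 * ‖z - T z‖ + ‖z - u‖ := by
    refine abs_le_of_sq_le_sq' ?_ (by positivity) |>.2
    nlinarith [norm_nonneg (z - T z), norm_nonneg (z - u),
      mul_nonneg (norm_nonneg (z - T z)) (norm_nonneg (z - u))]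
  linarith

theorem norm_sub_le_of_nonspreading_of_fixed {E : Type*} [NormedAddCommGroup E] {T : E → E}
    {z p : E} (hp : T p = p) (h : 2 * ‖T z - T p‖ ^ 2 ≤ ‖T z - p‖ ^ 2 + ‖T p - z‖ ^ 2) :
    ‖T z - p‖ ≤ ‖z - p‖ := by
  rw [hp, norm_sub_rev p z] at h
  exact (sq_le_sq₀ (norm_nonneg _) (norm_nonneg _)).1 (by linarith)

theorem norm_convexCombination_sub_le {E : Type*} [NormedAddCommGroup E] [NormedSpace ℝ E]
    {t : ℝ} (ht0 : 0 ≤ t) (ht1 : t ≤ 1) (u v p : E) :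
    ‖(1 - t) • u + t • v - p‖ ≤ (1 - t) * ‖u - p‖ + t * ‖v - p‖ := by
  rw [show (1 - t) • u + t • v - p = (1 - t) • (u - p) + t • (v - p) by module]
  refine (norm_add_le _ _).trans_eq ?_
  rw [norm_smul, norm_smul, Real.norm_of_nonneg ht0, Real.norm_of_nonneg (sub_nonneg.2 ht1)]

/-- Demiclosedness at zero of `id - T`, for a nonspreading `T` and under Opial's inequality. -/
theorem fixed_of_nonspreading_of_opial {E : Type*} [NormedAddCommGroup E] {T : E → E}
    {z : ℕ → E} {u : E} {r : ℝ} (hr : ∀ n, ‖z n‖ ≤ r)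
    (hOpial : ∀ v, v ≠ u → liminf (fun n => ‖z n - u‖) atTop < liminf (fun n => ‖z n - v‖) atTop)
    (hT : ∀ n, 2 * ‖T (z n) - T u‖ ^ 2 ≤ ‖T (z n) - u‖ ^ 2 + ‖T u - z n‖ ^ 2)
    (hz : Tendsto (fun n => ‖z n - T (z n)‖) atTop (𝓝 0)) : T u = u := by
  by_contra hne
  obtain ⟨c, hc, hcv⟩ := exists_between (hOpial _ hne)
  obtain ⟨b, hb, hbc⟩ := exists_between hc
  have hbdd : IsBoundedUnder (· ≤ ·) atTop fun n => ‖z n - u‖ :=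
    isBoundedUnder_of ⟨r + ‖u‖, fun n => (norm_sub_le _ _).trans (by gcongr; exact hr n)⟩
  have h1 : ∃ᶠ n in atTop, ‖z n - u‖ < b :=
    frequently_lt_of_liminf_lt hbdd.isCoboundedUnder_ge hb
  have h2 : ∀ᶠ n in atTop, c < ‖z n - T u‖ :=
    eventually_lt_of_lt_liminf hcv (isBoundedUnder_of ⟨0, fun n => norm_nonneg _⟩)
  have h3 : ∀ᶠ n in atTop, ‖z n - T (z n)‖ < (c - b) / 5 :=
    hz.eventually_lt_const (by linarith)
  obtain ⟨n, hn1, hn2, hn3⟩ := (h1.and_eventually (h2.and h3)).exists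
  linarith [norm_sub_le_of_nonspreading (hT n)]

/-- Let `E` be a uniformly convex real Banach space satisfying Opial's
condition, `C` a nonempty closed convex subset of `E`, and `T` a nonspreading self-mapping of
`C` (i.e. `2‖Tx−Ty‖² ≤ ‖Tx−y‖² + ‖Ty−x‖²`) with a fixed point. Then the Ishikawa iteration
(with `λₙ ∈ [0,1]`, `γₙ ∈ [a,1]`, `0 < a ≤ 1`, `liminf λₙ(1−λₙ) > 0`) converges weakly to a
fixed point of `T`. -/
theorem ishikawa_nonspreading_weak_convergence
    {E : Type*} [NormedAddCommGroup E] [NormedSpace ℝ E] [CompleteSpace E]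
    [UniformConvexSpace E]
    (hOpial : ∀ (z : ℕ → E) (u : E),
      (∀ f : E →L[ℝ] ℝ, Tendsto (fun n => f (z n)) atTop (𝓝 (f u))) →
      ∀ v : E, v ≠ u →
        Filter.liminf (fun n => ‖z n - u‖) atTop < Filter.liminf (fun n => ‖z n - v‖) atTop)
    (C : Set E) (hCne : C.Nonempty) (hCcl : IsClosed C) (hCcv : Convex ℝ C)
    (T : E → E) (hTself : Set.MapsTo T C C)
    (hnonspread : ∀ x ∈ C, ∀ y ∈ C,
      2 * ‖T x - T y‖ ^ 2 ≤ ‖T x - y‖ ^ 2 + ‖T y - x‖ ^ 2)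
    (hF : ∃ p ∈ C, T p = p)
    (a : ℝ) (ha0 : 0 < a) (ha1 : a ≤ 1)
    (lam gam : ℕ → ℝ)
    (hlam : ∀ n, lam n ∈ Set.Icc (0 : ℝ) 1) (hgam : ∀ n, gam n ∈ Set.Icc a 1)
    (hliminf : 0 < Filter.liminf (fun n => lam n * (1 - lam n)) atTop)
    (x y : ℕ → E) (x₀ : E) (hx₀ : x₀ ∈ C) (hinit : x 0 = x₀)
    (hy : ∀ n, y n = (1 - lam n) • x n + lam n • T (x n))
    (hxs : ∀ n, x (n + 1) = (1 - gam n) • x n + gam n • T (y n)) :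
    ∃ p ∈ C, T p = p ∧
      ∀ f : E →L[ℝ] ℝ, Tendsto (fun n => f (x n)) atTop (𝓝 (f p)) := by
  have hquasi {p z : E} (hp : p ∈ C) (hTp : T p = p) (hz : z ∈ C) : ‖T z - p‖ ≤ ‖z - p‖ :=
    norm_sub_le_of_nonspreading_of_fixed hTp (hnonspread z hz p hp)
  have hcomb {t : ℝ} (ht0 : 0 ≤ t) (ht1 : t ≤ 1) {u v : E} (hu : u ∈ C) (hv : v ∈ C) :
      (1 - t) • u + t • v ∈ C :=
    hCcv hu hv (sub_nonneg.2 ht1) ht0 (sub_add_cancel _ _)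
  have hyC_of {n : ℕ} (h : x n ∈ C) : y n ∈ C := by
    rw [hy]; exact hcomb (hlam n).1 (hlam n).2 h (hTself h)
  have hxC (n : ℕ) : x n ∈ C := by
    induction n with
    | zero => rwa [hinit]
    | succ n ih =>
      rw [hxs]; exact hcomb (ha0.le.trans (hgam n).1) (hgam n).2 ih (hTself (hyC_of ih))
  have hyle {p : E} (hp : p ∈ C) (hTp : T p = p) (n : ℕ) : ‖y n - p‖ ≤ ‖x n - p‖ := by
    rw [hy]
    refine (norm_convexCombination_sub_le (hlam n).1 (hlam n).2 _ _ _).trans ?_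
    nlinarith [hquasi hp hTp (hxC n), (hlam n).1]
  have hdecr {p : E} (hp : p ∈ C) (hTp : T p = p) (n : ℕ) :
      a * (‖x n - p‖ - ‖y n - p‖) ≤ ‖x n - p‖ - ‖x (n + 1) - p‖ := by
    have h1 : ‖x (n + 1) - p‖ ≤ (1 - gam n) * ‖x n - p‖ + gam n * ‖T (y n) - p‖ := by
      rw [hxs]
      exact norm_convexCombination_sub_le (ha0.le.trans (hgam n).1) (hgam n).2 _ _ _
    nlinarith [hquasi hp hTp (hyC_of (hxC n)), hyle hp hTp n, (hgam n).1]
  have hanti {p : E} (hp : p ∈ C) (hTp : T p = p) : Antitone fun n => ‖x n - p‖ :=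
    antitone_nat_of_succ_le fun n => by
      nlinarith [hdecr hp hTp n, hyle hp hTp n]
  have hconv {p : E} (hp : p ∈ C) (hTp : T p = p) :
      ∃ c, Tendsto (fun n => ‖x n - p‖) atTop (𝓝 c) :=
    ⟨_, tendsto_atTop_ciInf (hanti hp hTp) ⟨0, by rintro _ ⟨n, rfl⟩; exact norm_nonneg _⟩⟩
  obtain ⟨p, hp, hTp⟩ := hF
  have hxbdd (n : ℕ) : ‖x n‖ ≤ ‖x 0 - p‖ + ‖p‖ := by
    linarith [hanti hp hTp (Nat.zero_le n), norm_sub_norm_le (x n) p]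
  have hgap : Tendsto (fun n => a * (‖x n - p‖ - ‖y n - p‖)) atTop (𝓝 0) := by
    obtain ⟨c, hc⟩ := hconv hp hTp
    refine squeeze_zero (fun n => mul_nonneg ha0.le (sub_nonneg.2 (hyle hp hTp n)))
      (hdecr hp hTp) ?_
    simpa using hc.sub (hc.comp (tendsto_add_atTop_nat 1))
  have hres : Tendsto (fun n => ‖x n - T (x n)‖) atTop (𝓝 0) := by
    refine tendsto_order.2 ⟨fun b hb => Eventually.of_forall fun n => hb.trans_le (norm_nonneg _),
      fun ε hε => ?_⟩
    obtain ⟨κ, hκ, hκlim⟩ := exists_between hliminf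
    obtain ⟨δ, hδ, h⟩ := exists_pos_forall_norm_convexCombination_le (E := E) hε ‖x 0 - p‖
    have h1 : ∀ᶠ n in atTop, κ < lam n * (1 - lam n) :=
      eventually_lt_of_lt_liminf hκlim (isBoundedUnder_of
        ⟨0, fun n => mul_nonneg (hlam n).1 (sub_nonneg.2 (hlam n).2)⟩)
    have h2 := hgap.eventually_lt_const (show 0 < a * (κ * δ) by positivity)
    filter_upwards [h1, h2] with n hn1 hn2
    by_contra! hn3
    have h3 := h _ (hanti hp hTp (Nat.zero_le n)) (x n - p) (T (x n) - p) le_rfl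
      (hquasi hp hTp (hxC n)) (by rwa [sub_sub_sub_cancel_right]) (lam n) (hlam n)
    rw [show (1 - lam n) • (x n - p) + lam n • (T (x n) - p) = y n - p by
      rw [hy]; module] at h3
    have h4 := lt_of_mul_lt_mul_left hn2 ha0.le
    nlinarith [mul_lt_mul_of_pos_right hn1 hδ]
  have hsub {ns : ℕ → ℕ} (hns : Tendsto ns atTop atTop) :
      ∃ u ∈ C, T u = u ∧ ∃ ms : ℕ → ℕ, Tendsto ms atTop atTop ∧
        ∀ f : E →L[ℝ] ℝ, Tendsto (fun n => f (x (ns (ms n)))) atTop (𝓝 (f u)) := by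
    obtain ⟨u, ms, hms, huK, hu⟩ := exists_subseq_weak_tendsto fun n => hxbdd (ns n)
    have huC : u ∈ C := huK C hCcl hCcv fun n => hxC _
    exact ⟨u, huC, fixed_of_nonspreading_of_opial (fun n => hxbdd (ns (ms n))) (hOpial _ u hu)
      (fun n => hnonspread _ (hxC _) u huC) (hres.comp (hns.comp hms.tendsto_atTop)), ms,
      hms.tendsto_atTop, hu⟩
  obtain ⟨u, huC, hTu, φ, hφ, hu⟩ := hsub tendsto_id
  refine ⟨u, huC, hTu, fun f => tendsto_of_subseq_tendsto fun ns hns => ?_⟩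
  obtain ⟨v, hvC, hTv, ms, hms, hv⟩ := hsub hns
  refine ⟨ms, ?_⟩
  suffices v = u by rw [← this]; exact hv f
  by_contra hne
  obtain ⟨b, hb⟩ := hconv huC hTu
  obtain ⟨c, hc⟩ := hconv hvC hTv
  have hlt : b < c := by
    rw [← (hb.comp hφ).liminf_eq, ← (hc.comp hφ).liminf_eq]
    exact hOpial _ u hu v hne
  have hgt : c < b := by
    rw [← (hb.comp (hns.comp hms)).liminf_eq, ← (hc.comp (hns.comp hms)).liminf_eq]
    exact hOpial _ v hv u (Ne.symm hne)
  exact lt_asymm hlt hgt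
end

section
/- Let E be a real Banach space satisfying Opial's condition, C a nonempty closed convex subset of E, and T an (α,β,γ,δ)-symmetric generalized hybrid self-mapping of C satisfying α+2β+γ ≥ 0, α+β > 0, β ≤ 0 and δ ≥ 0. If {xₙ} is a bounded sequence in C with ‖xₙ − Txₙ‖ → 0, then for every u ∈ C and every n, ‖Txₙ − Tu‖² ≤ ‖xₙ − u‖² − (2β/(α+β))‖xₙ − Txₙ‖² − (2β/(α+β))(‖xₙ − u‖ + ‖Txₙ − Tu‖)‖Txₙ − xₙ‖. -/
open Filter Topology

/-- Let `E` be a real Banach space satisfying Opial's condition, `C` a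
nonempty closed convex subset of `E`, and `T` an `(α,β,γ,δ)`-symmetric generalized hybrid
self-mapping of `C` with `α+2β+γ ≥ 0`, `α+β > 0`, `β ≤ 0`, `δ ≥ 0`. If `{xₙ}` is a bounded
sequence in `C` with `‖xₙ − Txₙ‖ → 0`, then for every `u ∈ C` and every `n`,
`‖Txₙ − Tu‖² ≤ ‖xₙ − u‖² − (2β/(α+β))‖xₙ − Txₙ‖² − (2β/(α+β))(‖xₙ − u‖ + ‖Txₙ − Tu‖)‖Txₙ − xₙ‖`. -/
theorem symm_gen_hybrid_key_inequality
    {E : Type*} [NormedAddCommGroup E] [NormedSpace ℝ E] [CompleteSpace E]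
    (hOpial : ∀ (z : ℕ → E) (u : E),
      (∀ f : E →L[ℝ] ℝ, Tendsto (fun n => f (z n)) atTop (𝓝 (f u))) →
      ∀ v : E, v ≠ u →
        Filter.liminf (fun n => ‖z n - u‖) atTop < Filter.liminf (fun n => ‖z n - v‖) atTop)
    (C : Set E) (hCne : C.Nonempty) (hCcl : IsClosed C) (hCcv : Convex ℝ C)
    (T : E → E) (hTself : Set.MapsTo T C C)
    (α β γ δ : ℝ)
    (hhyb : ∀ x ∈ C, ∀ y ∈ C,
      α * ‖T x - T y‖ ^ 2 + β * (‖x - T y‖ ^ 2 + ‖T x - y‖ ^ 2) + γ * ‖x - y‖ ^ 2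
        + δ * (‖x - T x‖ ^ 2 + ‖y - T y‖ ^ 2) ≤ 0)
    (h1 : α + 2 * β + γ ≥ 0) (h2 : α + β > 0) (h3 : β ≤ 0) (h4 : δ ≥ 0)
    (x : ℕ → E) (hx : ∀ n, x n ∈ C)
    (hbdd : Bornology.IsBounded (Set.range x))
    (hAF : Tendsto (fun n => ‖x n - T (x n)‖) atTop (𝓝 0)) :
    ∀ u ∈ C, ∀ n : ℕ,
      ‖T (x n) - T u‖ ^ 2 ≤
        ‖x n - u‖ ^ 2 - (2 * β / (α + β)) * ‖x n - T (x n)‖ ^ 2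
          - (2 * β / (α + β)) * (‖x n - u‖ + ‖T (x n) - T u‖) * ‖T (x n) - x n‖ := by
  intro u hu n
  have hsym : ‖T (x n) - x n‖ = ‖x n - T (x n)‖ := norm_sub_rev _ _
  have hp : ‖x n - T u‖ ≤ ‖x n - T (x n)‖ + ‖T (x n) - T u‖ := norm_sub_le_norm_sub_add_norm_sub _ _ _
  have hq : ‖T (x n) - u‖ ≤ ‖x n - T (x n)‖ + ‖x n - u‖ :=
    hsym ▸ norm_sub_le_norm_sub_add_norm_sub _ _ _
  have hh := hhyb (x n) (hx n) u hu
  rw [hsym]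
  have hp2 := mul_le_mul_of_nonpos_left (pow_le_pow_left₀ (norm_nonneg _) hp 2) h3
  have hq2 := mul_le_mul_of_nonpos_left (pow_le_pow_left₀ (norm_nonneg _) hq 2) h3
  have hδ : 0 ≤ δ * (‖x n - T (x n)‖ ^ 2 + ‖u - T u‖ ^ 2) := by positivity
  have hb := mul_nonneg h1 (sq_nonneg ‖x n - u‖)
  generalize ‖T (x n) - T u‖ = a at *
  generalize ‖x n - u‖ = b at *
  generalize ‖x n - T (x n)‖ = d at *
  have hdiv : b ^ 2 - 2 * β / (α + β) * d ^ 2 - 2 * β / (α + β) * (b + a) * d =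
      (b ^ 2 * (α + β) - 2 * β * d ^ 2 - 2 * β * (b + a) * d) / (α + β) := by
    field_simp
  rw [hdiv, le_div_iff₀ h2]
  linarith
end
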